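/- arXiv:1104.3607 — 2 statements merged into one kernel-verified Lean document; each statement's English description precedes it below -/
import Mathlib

section
/- Let k be a field of characteristic 0, X a type, and L = FreeLieAlgebra k X the free Lie algebra on X. Let d_n : ⋀^n L → ⋀^{n−1} L be the Chevalley–Eilenberg differentials with trivial coefficients, i.e. the unique linear maps with d_n(l₁∧…∧l_n) = Σ_{1≤i<j≤n} (−1)^{i+j−1} [l_i,l_j]∧l₁∧…∧l̂_i∧…∧l̂_j∧…∧l_n. Then: (1) ker d_n = range d_{n+1} for every n ≥ 2; and (2) the composite of the canonical generator map X → L with the quotient map L → L ⧸ range d₂ extends to a k-linear isomorphism from the free k-vector space on X onto L ⧸ range d₂. In other words, the Chevalley–Eilenberg homology of a free Lie algebra with trivial coefficients vanishes in degrees ≥ 2 and equals the space spanned by the generators in degree 1. -/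
/-!
STATEMENT 3: the Chevalley–Eilenberg homology of a free Lie algebra with trivial coefficients
vanishes in degrees ≥ 2 and equals the space spanned by the generators in degree 1.
As in Statement 1, the family is indexed by `D n : ⋀^(n+1) L → ⋀^n L`, i.e. `D n = d_{n+1}`.
-/

open scoped TensorProduct

set_option synthInstance.maxHeartbeats 1000000
set_option maxHeartbeats 1000000

/-- The wedge `v₁ ∧ … ∧ vₙ`, as an element of the `n`-th exterior power `⋀[k]^n L`. -/
noncomputable def wedge (k : Type*) [Field k] {L : Type*} [AddCommGroup L] [Module k L]
    (n : ℕ) (v : Fin n → L) : ⋀[k]^n L :=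
  ⟨ExteriorAlgebra.ιMulti k n v, ExteriorAlgebra.ιMulti_range k n (Set.mem_range_self v)⟩

/-- The strictly monotone map `Fin n → Fin (n+2)` omitting the two indices `i < j`. -/
def omit2 {n : ℕ} (i j : Fin (n + 2)) (h : i < j) (m : Fin n) : Fin (n + 2) :=
  j.succAbove ((i.castLT ((Fin.lt_def.mp h).trans_le (Nat.lt_succ_iff.mp j.isLt))).succAbove m)

/-- The generator condition for the Chevalley–Eilenberg differential with trivial
coefficients (see Statement 1). -/
def IsCEDiff (k : Type*) [Field k] (L : Type*) [LieRing L] [LieAlgebra k L]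
    (D : (n : ℕ) → (⋀[k]^(n+1) L →ₗ[k] ⋀[k]^n L)) : Prop :=
  (∀ l : Fin 1 → L, D 0 (wedge k 1 l) = 0) ∧
  (∀ (n : ℕ) (l : Fin (n + 2) → L),
    D (n + 1) (wedge k (n + 2) l) =
      ∑ i : Fin (n + 2), ∑ j : Fin (n + 2),
        if h : i < j then
          ((-1 : k) ^ (i.val + j.val + 1)) •
            wedge k (n + 1) (Fin.cons ⁅l i, l j⁆ (fun m => l (omit2 i j h m)))
        else 0)

/-!
Lazard elimination of a letter `x` writes the free Lie algebra as `L(X) = k·x ⋉ L(X')`, where `X'`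
consists of the letters `(i, y)`, standing for `ad(x)ⁱ y`, with `i ≥ 0` and `y ≠ x`, and `ad x` acts
on `L(X')` by the shift `(i, y) ↦ (i + 1, y)`. Every chain is then uniquely of the form
`z₀ + x ∧ z₁` with `z₀, z₁` in the exterior algebra of `L(X')`, and Cartan's formula
`d(x ∧ z) = ad(x) z - x ∧ dz` exhibits the complex of `L(X)` as the mapping cone of the shift on the
complex of `L(X')`. As the shift is injective on `H₁ = k^(X')`, the vanishing of the homology of
`L(X')` in degrees at least two implies the same for `L(X)`.

This reduction terminates when letters carry positive weights, finitely many of them at most `N`,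
and only chains of weight at most `N` are considered: with `(i, y)` of weight `w y + i * w x`,
eliminating a letter of minimal weight leaves one letter fewer of that weight. A given chain
involves finitely many letters, so all others can be given a weight larger than `N`.
-/

namespace ChevalleyEilenberg

open ExteriorAlgebra FreeLieAlgebra

attribute [local instance] LieRing.ofAssociativeRing LieAlgebra.ofAssociativeAlgebra

section ExteriorAlgebra

variable {k : Type*} [CommRing k] {V W : Type*} [AddCommGroup V] [Module k V] [AddCommGroup W]
  [Module k W]

theorem exteriorAlgebra_linearMap_ext {A B : ExteriorAlgebra k V →ₗ[k] W} (one : A 1 = B 1)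
    (ι_mul : ∀ a z, A z = B z → A (ι k a * z) = B (ι k a * z)) : A = B := by
  refine LinearMap.ext fun z ↦ ?_
  induction z using CliffordAlgebra.left_induction with
  | algebraMap r => rw [Algebra.algebraMap_eq_smul_one, map_smul, map_smul, one]
  | add z z' hz hz' => rw [map_add, map_add, hz, hz']
  | ι_mul z a hz => exact ι_mul a z hz

theorem ι_mul_ι_mul (a b : V) (z : ExteriorAlgebra k V) :
    ι k a * (ι k b * z) = -(ι k b * (ι k a * z)) := by
  rw [← mul_assoc, ← mul_assoc, ← neg_mul, eq_neg_of_add_eq_zero_left (ι_add_mul_swap a b)]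

theorem ι_mul_ι_mul_self (a : V) (z : ExteriorAlgebra k V) : ι k a * (ι k a * z) = 0 := by
  rw [← mul_assoc, ι_sq_zero, zero_mul]

theorem ι_mul_mem_exteriorPower {n : ℕ} (a : V) {z : ExteriorAlgebra k V} (hz : z ∈ ⋀[k]^n V) :
    ι k a * z ∈ ⋀[k]^(n + 1) V := by
  rw [exteriorPower, pow_succ']
  exact Submodule.mul_mem_mul (LinearMap.mem_range_self _ a) hz

theorem exteriorPower_zero_le {S : Submodule k (ExteriorAlgebra k V)} (h : 1 ∈ S) :
    ⋀[k]^0 V ≤ S := by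
  rw [exteriorPower, pow_zero]
  exact Submodule.one_le.mpr h

theorem exteriorPower_succ_le {n : ℕ} {S : Submodule k (ExteriorAlgebra k V)}
    (h : ∀ a, ∀ z ∈ ⋀[k]^n V, ι k a * z ∈ S) : ⋀[k]^(n + 1) V ≤ S := by
  rw [exteriorPower, pow_succ', Submodule.mul_le]
  rintro _ ⟨a, rfl⟩ z hz
  exact h a z hz

/-- The recursion step `(a, z, z') ↦ f a ∧ z + a ∧ z'` of `derivationExtension`, where `z'` is the
value already computed at `z`. -/
noncomputable def derivationStep (f : Module.End k V) :
    V →ₗ[k] ExteriorAlgebra k V × ExteriorAlgebra k V →ₗ[k] ExteriorAlgebra k V :=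
  (LinearMap.mul k _ ∘ₗ ι k ∘ₗ f).compl₂ (LinearMap.fst k _ _) +
    (LinearMap.mul k _ ∘ₗ ι k).compl₂ (LinearMap.snd k _ _)

theorem derivationStep_apply (f : Module.End k V) (a : V)
    (p : ExteriorAlgebra k V × ExteriorAlgebra k V) :
    derivationStep f a p = ι k (f a) * p.1 + ι k a * p.2 := rfl

theorem derivationStep_step (f : Module.End k V) (a : V) (z z' : ExteriorAlgebra k V) :
    derivationStep f a (ι k a * z, derivationStep f a (z, z')) =
      (0 : QuadraticForm k V) a • z' := by
  rw [derivationStep_apply, derivationStep_apply, mul_add, ι_mul_ι_mul_self, ι_mul_ι_mul (f a)]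
  simp

/-- The unique derivation of the exterior algebra extending the endomorphism `f` of `V`, as a
linear map. -/
noncomputable def derivationExtension (f : Module.End k V) : Module.End k (ExteriorAlgebra k V) :=
  CliffordAlgebra.foldr' 0 (derivationStep f) (derivationStep_step f) 0

@[simp]
theorem derivationExtension_one (f : Module.End k V) : derivationExtension f 1 = 0 := by
  simpa [derivationExtension] using
    CliffordAlgebra.foldr'_algebraMap 0 (derivationStep f) (derivationStep_step f) 0 1

@[simp]
theorem derivationExtension_ι_mul (f : Module.End k V) (a : V) (z : ExteriorAlgebra k V) :
    derivationExtension f (ι k a * z) = ι k (f a) * z + ι k a * derivationExtension f z :=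
  CliffordAlgebra.foldr'_ι_mul ..

@[simp]
theorem derivationExtension_ι (f : Module.End k V) (a : V) :
    derivationExtension f (ι k a) = ι k (f a) := by
  simpa using derivationExtension_ι_mul f a 1

variable (k V) in
/-- `derivationExtension` as a homomorphism of Lie algebras. -/
noncomputable def derivationExtensionHom :
    Module.End k V →ₗ⁅k⁆ Module.End k (ExteriorAlgebra k V) where
  toFun := derivationExtension
  map_add' f g := exteriorAlgebra_linearMap_ext (by simp) fun a z hz ↦ by
    simp only [LinearMap.add_apply, derivationExtension_ι_mul, map_add] at hz ⊢
    rw [hz]; noncomm_ring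
  map_smul' c f := exteriorAlgebra_linearMap_ext (by simp) fun a z hz ↦ by
    simp_all
  map_lie' {f g} := exteriorAlgebra_linearMap_ext (by simp [LieRing.of_associative_ring_bracket])
    fun a z hz ↦ by
      simp only [LieRing.of_associative_ring_bracket, LinearMap.sub_apply, Module.End.mul_apply,
        derivationExtension_ι_mul, map_add, map_sub] at hz ⊢
      rw [hz]; noncomm_ring

theorem map_derivationExtension {f : Module.End k V} {g : Module.End k W} {j : V →ₗ[k] W}
    (hj : ∀ a, j (f a) = g (j a)) (z : ExteriorAlgebra k V) :
    map j (derivationExtension f z) = derivationExtension g (map j z) := by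
  refine LinearMap.congr_fun (exteriorAlgebra_linearMap_ext
    (A := (map j).toLinearMap ∘ₗ derivationExtension f)
    (B := derivationExtension g ∘ₗ (map j).toLinearMap) (by simp) fun a z hz ↦ ?_) z
  simp_all

theorem contractLeft_map_eq_zero {j : V →ₗ[k] W} {c : Module.Dual k W} (hcj : c ∘ₗ j = 0)
    (z : ExteriorAlgebra k V) :
    CliffordAlgebra.contractLeft (Q := (0 : QuadraticForm k W)) c (map j z) = 0 := by
  refine LinearMap.congr_fun (exteriorAlgebra_linearMap_ext (B := 0)
    (A := CliffordAlgebra.contractLeft (Q := (0 : QuadraticForm k W)) c ∘ₗ (map j).toLinearMap)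
    (by simp) fun a z hz ↦ ?_) z
  have hc : c (j a) = 0 := LinearMap.congr_fun hcj a
  have hcι := CliffordAlgebra.contractLeft_ι_mul (Q := (0 : QuadraticForm k W)) c (j a) (map j z)
  simp only [LinearMap.comp_apply, AlgHom.toLinearMap_apply, LinearMap.zero_apply] at hz ⊢
  rw [map_mul, map_apply_ι]
  simpa [hc, hz] using hcι

/-- Both summands are recovered from the sum: `map r` kills the second one, and contraction with
`c` strips the factor `x` off it. -/
theorem eq_zero_of_map_add_ι_mul_map_eq_zero {j : V →ₗ[k] W} {r : W →ₗ[k] V}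
    {c : Module.Dual k W} {x : W} (hrj : r ∘ₗ j = LinearMap.id) (hrx : r x = 0)
    (hcj : c ∘ₗ j = 0) (hcx : c x = 1) {z₀ z₁ : ExteriorAlgebra k V}
    (h : map j z₀ + ι k x * map j z₁ = 0) : z₀ = 0 ∧ z₁ = 0 := by
  have hr : Function.LeftInverse (map r) (map j) :=
    leftInverse_map_iff.mpr (LinearMap.congr_fun hrj)
  have hz₀ : z₀ = 0 := by simpa [hr z₀, hrx] using congrArg (map r) h
  have hmul : ι k x * map j z₁ = 0 := by simpa [hz₀] using h
  have hz₁ : map j z₁ = 0 := by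
    have hcontract := CliffordAlgebra.contractLeft_ι_mul (Q := (0 : QuadraticForm k W)) c x
      (map j z₁)
    rw [hcx, contractLeft_map_eq_zero hcj, mul_zero, sub_zero, one_smul] at hcontract
    rw [← hcontract]
    exact (congrArg _ hmul).trans (map_zero _)
  exact ⟨hz₀, hr.injective (by rw [hz₁, map_zero])⟩

end ExteriorAlgebra

section Differential

variable {k : Type*} [CommRing k] {L M : Type*} [LieRing L] [LieAlgebra k L] [LieRing M]
  [LieAlgebra k M]

/-- The action of `a : L` on the exterior algebra of `L` extending the adjoint action. -/
noncomputable abbrev adExterior (a : L) : Module.End k (ExteriorAlgebra k L) :=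
  derivationExtension (LieAlgebra.ad k L a)

variable (k L) in
/-- The recursion step `(a, z, z') ↦ a · z - a ∧ z'` of `differential`, where `z'` is the value
already computed at `z`. -/
noncomputable def differentialStep :
    L →ₗ[k] ExteriorAlgebra k L × ExteriorAlgebra k L →ₗ[k] ExteriorAlgebra k L :=
  LinearMap.compl₂ ((derivationExtensionHom k L).comp (LieAlgebra.ad k L)).toLinearMap
      (LinearMap.fst k _ _) -
    (LinearMap.mul k _ ∘ₗ ι k).compl₂ (LinearMap.snd k _ _)

theorem differentialStep_apply (a : L) (p : ExteriorAlgebra k L × ExteriorAlgebra k L) :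
    differentialStep k L a p = adExterior a p.1 - ι k a * p.2 := rfl

theorem differentialStep_step (a : L) (z z' : ExteriorAlgebra k L) :
    differentialStep k L a (ι k a * z, differentialStep k L a (z, z')) =
      (0 : QuadraticForm k L) a • z' := by
  rw [differentialStep_apply, differentialStep_apply, mul_sub, ι_mul_ι_mul_self]
  simp

variable (k L) in
/-- The Chevalley–Eilenberg differential with trivial coefficients on the whole exterior algebra
of `L`. It is defined by Cartan's formula `differential_ι_mul`, which determines it recursively. -/
noncomputable def differential : Module.End k (ExteriorAlgebra k L) :=
  CliffordAlgebra.foldr' 0 (differentialStep k L) differentialStep_step 0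

@[simp]
theorem differential_one : differential k L 1 = 0 := by
  simpa [differential] using
    CliffordAlgebra.foldr'_algebraMap 0 (differentialStep k L) differentialStep_step 0 1

theorem differential_ι_mul (a : L) (z : ExteriorAlgebra k L) :
    differential k L (ι k a * z) = adExterior a z - ι k a * differential k L z :=
  CliffordAlgebra.foldr'_ι_mul ..

@[simp]
theorem differential_ι (a : L) : differential k L (ι k a) = 0 := by
  simpa using differential_ι_mul (k := k) a 1

theorem differential_ι_mul_ι (a b : L) : differential k L (ι k a * ι k b) = ι k ⁅a, b⁆ := by
  simp [differential_ι_mul]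

theorem differential_derivationExtension (D : LieDerivation k L L) (z : ExteriorAlgebra k L) :
    differential k L (derivationExtension D z) = derivationExtension D (differential k L z) := by
  refine LinearMap.congr_fun (exteriorAlgebra_linearMap_ext
    (A := differential k L ∘ₗ derivationExtension D)
    (B := derivationExtension D ∘ₗ differential k L) (by simp) fun a z hz ↦ ?_) z
  have had : LieAlgebra.ad k L (D a) = ⁅(D : Module.End k L), LieAlgebra.ad k L a⁆ := by
    ext b
    simp [LieRing.of_associative_ring_bracket, D.apply_lie_eq_add]
  have hcomm : adExterior (D a) z =
      derivationExtension D (adExterior a z) - adExterior a (derivationExtension D z) := by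
    rw [adExterior, had]
    exact LinearMap.congr_fun ((derivationExtensionHom k L).map_lie _ _) z
  simp only [LinearMap.comp_apply, derivationExtension_ι_mul, map_add, map_sub,
    differential_ι_mul, LieDerivation.coeFn_coe] at hz ⊢
  rw [hz, hcomm]
  abel

theorem differential_differential (z : ExteriorAlgebra k L) :
    differential k L (differential k L z) = 0 := by
  refine LinearMap.congr_fun (exteriorAlgebra_linearMap_ext
    (A := differential k L ∘ₗ differential k L) (B := 0) (by simp) fun a z hz ↦ ?_) z
  have had : differential k L (adExterior a z) = adExterior a (differential k L z) := by
    rw [adExterior, ← LieDerivation.coe_ad_apply_eq_ad_apply]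
    exact differential_derivationExtension _ z
  simp only [LinearMap.comp_apply, LinearMap.zero_apply] at hz ⊢
  rw [differential_ι_mul, map_sub, differential_ι_mul, had, hz, mul_zero, sub_zero, sub_self]

theorem map_differential (j : L →ₗ⁅k⁆ M) (z : ExteriorAlgebra k L) :
    map j.toLinearMap (differential k L z) = differential k M (map j.toLinearMap z) := by
  refine LinearMap.congr_fun (exteriorAlgebra_linearMap_ext
    (A := (map j.toLinearMap).toLinearMap ∘ₗ differential k L)
    (B := differential k M ∘ₗ (map j.toLinearMap).toLinearMap) (by simp) fun a z hz ↦ ?_) z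
  have had : map j.toLinearMap (adExterior a z) = adExterior (j a) (map j.toLinearMap z) :=
    map_derivationExtension (fun b ↦ j.map_lie a b) z
  simp_all [differential_ι_mul]

theorem map_differential_eq_zero {V : Type*} [AddCommGroup V] [Module k V] {p : L →ₗ[k] V}
    (hp : ∀ a b : L, p ⁅a, b⁆ = 0) (z : ExteriorAlgebra k L) :
    map p (differential k L z) = 0 := by
  refine LinearMap.congr_fun (exteriorAlgebra_linearMap_ext
    (A := (map p).toLinearMap ∘ₗ differential k L) (B := 0) (by simp) fun a z hz ↦ ?_) z
  have had : map p (adExterior a z) = 0 := by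
    rw [map_derivationExtension (g := 0) (by simp [hp])]
    exact LinearMap.congr_fun (map_zero (derivationExtensionHom k V)) _
  simp_all [differential_ι_mul]

end Differential

section FreeLieAlgebra

variable {k : Type*} [CommRing k] {X : Type*}

theorem lieSpan_range_of :
    LieSubalgebra.lieSpan k (FreeLieAlgebra k X) (Set.range (of k)) = ⊤ := by
  set S := LieSubalgebra.lieSpan k (FreeLieAlgebra k X) (Set.range (of k))
  let toSpan : FreeLieAlgebra k X →ₗ⁅k⁆ S :=
    lift k fun x ↦ ⟨of k x, LieSubalgebra.subset_lieSpan ⟨x, rfl⟩⟩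
  have hsplit : S.incl.comp toSpan = LieHom.id := by ext x; simp [toSpan]
  refine eq_top_iff.mpr fun a _ ↦ ?_
  rw [← LieHom.id_apply (R := k) a, ← hsplit]
  exact (toSpan a).2

@[elab_as_elim]
theorem freeLieAlgebra_induction {P : FreeLieAlgebra k X → Prop} (of : ∀ x, P (of k x))
    (zero : P 0) (add : ∀ a b, P a → P b → P (a + b)) (smul : ∀ (r : k) a, P a → P (r • a))
    (lie : ∀ a b, P a → P b → P ⁅a, b⁆) (a : FreeLieAlgebra k X) : P a := by
  have ha : a ∈ LieSubalgebra.lieSpan k (FreeLieAlgebra k X) (Set.range (FreeLieAlgebra.of k)) :=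
    lieSpan_range_of (k := k) (X := X) ▸ LieSubalgebra.mem_top a
  induction ha using LieSubalgebra.lieSpan_induction with
  | mem a ha => obtain ⟨x, rfl⟩ := ha; exact of x
  | zero => exact zero
  | add a b _ _ ha hb => exact add a b ha hb
  | smul r a _ ha => exact smul r a ha
  | lie a b _ _ ha hb => exact lie a b ha hb

theorem linearMap_ext_of_map_lie_eq_zero {V : Type*} [AddCommGroup V] [Module k V]
    {p q : FreeLieAlgebra k X →ₗ[k] V} (hp : ∀ a b : FreeLieAlgebra k X, p ⁅a, b⁆ = 0)
    (hq : ∀ a b : FreeLieAlgebra k X, q ⁅a, b⁆ = 0) (h : ∀ x, p (of k x) = q (of k x)) : p = q := by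
  ext a
  induction a using freeLieAlgebra_induction with
  | of x => exact h x
  | zero => simp
  | add a b ha hb => rw [map_add, map_add, ha, hb]
  | smul r a ha => rw [map_smul, map_smul, ha]
  | lie a b => rw [hp, hq]

open scoped Classical in
variable (k X) in
/-- The abelianization of the free Lie algebra: the coordinates with respect to the generators of
the degree-one part. The target `X → k` is abelian, being a commutative ring with the commutator
bracket. -/
noncomputable def generatorCoords : FreeLieAlgebra k X →ₗ⁅k⁆ X → k :=
  lift k fun x ↦ Pi.single x 1

open scoped Classical in
@[simp]
theorem generatorCoords_of (x : X) : generatorCoords k X (of k x) = Pi.single x 1 :=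
  lift_of_apply ..

@[simp]
theorem generatorCoords_lie (a b : FreeLieAlgebra k X) : generatorCoords k X ⁅a, b⁆ = 0 := by
  rw [LieHom.map_lie, LieRing.of_associative_ring_bracket, mul_comm, sub_self]

theorem generatorCoords_linearCombination (g : X →₀ k) :
    generatorCoords k X (Finsupp.linearCombination k (of k) g) = g := by
  classical
  induction g using Finsupp.induction_linear with
  | zero => simp
  | add g h hg hh => simp [hg, hh]
  | single x r => ext y; simp [Pi.single_apply, Finsupp.single_apply, eq_comm]

section Derivation

variable {M : Type*} [AddCommGroup M] [Module k M] [LieRingModule (FreeLieAlgebra k X) M]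
  [LieModule k (FreeLieAlgebra k X) M]

variable (k) in
/-- The homomorphism `a ↦ (a, D a)` into the semidirect product of the free Lie algebra with `M`,
where `D` is the derivation with `D x = f x`. -/
noncomputable def graphHom (f : X → M) :
    FreeLieAlgebra k X →ₗ⁅k⁆
      LieAlgebra.ofTwoCocycle (0 : LieModule.Cohomology.twoCocycle k (FreeLieAlgebra k X) M) :=
  lift k fun x ↦ LieAlgebra.ofProd 0 (of k x, f x)

theorem graphHom_fst (f : X → M) (a : FreeLieAlgebra k X) : (graphHom k f a).carrier.1 = a := by
  induction a using freeLieAlgebra_induction with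
  | of x => simp [graphHom, LieAlgebra.ofProd]
  | zero => rw [map_zero]; rfl
  | add a b ha hb =>
    rw [map_add]
    exact congrArg₂ (· + ·) ha hb
  | smul r a ha =>
    rw [map_smul]
    exact congrArg (r • ·) ha
  | lie a b ha hb =>
    rw [LieHom.map_lie]
    exact congrArg₂ (⁅·, ·⁆) ha hb

theorem graphHom_lie_snd (f : X → M) (a b : FreeLieAlgebra k X) :
    (graphHom k f ⁅a, b⁆).carrier.2 =
      ⁅a, (graphHom k f b).carrier.2⁆ - ⁅b, (graphHom k f a).carrier.2⁆ := by
  rw [LieHom.map_lie, LieAlgebra.bracket_ofTwoCocycle]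
  simp [LieAlgebra.ofProd, graphHom_fst]

variable (k) in
/-- The derivation of the free Lie algebra with prescribed values on the generators. -/
noncomputable def liftDerivation (f : X → M) : LieDerivation k (FreeLieAlgebra k X) M where
  toFun a := (graphHom k f a).carrier.2
  map_add' a b := by rw [map_add]; rfl
  map_smul' r a := by rw [map_smul]; rfl
  leibniz' := graphHom_lie_snd f

@[simp]
theorem liftDerivation_of (f : X → M) (x : X) : liftDerivation k f (of k x) = f x :=
  congrArg (fun p : LieAlgebra.ofTwoCocycle _ ↦ p.carrier.2) (lift_of_apply (R := k) _ x)

end Derivation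

end FreeLieAlgebra

section Elimination

variable {k : Type*} [CommRing k] {X : Type*} {x : X}

/-- The generators `ad(x)ⁱ y`, encoded as `(i, y)`, of the ideal of the free Lie algebra generated
by the letters other than `x`. -/
abbrev EliminationLetter (x : X) : Type _ := ℕ × {y : X // y ≠ x}

variable (k x) in
/-- The action of `ad x` on the free Lie algebra on the elimination letters. -/
noncomputable def eliminationShift :
    LieDerivation k (FreeLieAlgebra k (EliminationLetter x))
      (FreeLieAlgebra k (EliminationLetter x)) :=
  liftDerivation k fun p ↦ of k (p.1 + 1, p.2)

@[simp]
theorem eliminationShift_of (p : EliminationLetter x) :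
    eliminationShift k x (of k p) = of k (p.1 + 1, p.2) :=
  liftDerivation_of ..

variable (k x) in
/-- The inclusion `(i, y) ↦ ad(x)ⁱ y` of Lazard elimination. -/
noncomputable def eliminationInclusion :
    FreeLieAlgebra k (EliminationLetter x) →ₗ⁅k⁆ FreeLieAlgebra k X :=
  lift k fun p ↦ (⁅of k x, ·⁆)^[p.1] (of k p.2)

@[simp]
theorem eliminationInclusion_of_zero (y : {y : X // y ≠ x}) :
    eliminationInclusion k x (of k (0, y)) = of k y.1 :=
  lift_of_apply ..

@[simp]
theorem eliminationInclusion_of_succ (i : ℕ) (y : {y : X // y ≠ x}) :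
    eliminationInclusion k x (of k (i + 1, y)) =
      ⁅of k x, eliminationInclusion k x (of k (i, y))⁆ := by
  simp only [eliminationInclusion, lift_of_apply, Function.iterate_succ_apply']

theorem eliminationInclusion_shift (u : FreeLieAlgebra k (EliminationLetter x)) :
    eliminationInclusion k x (eliminationShift k x u) =
      ⁅of k x, eliminationInclusion k x u⁆ := by
  induction u using freeLieAlgebra_induction with
  | of p => simp
  | zero => simp
  | add a b ha hb => simp [ha, hb]
  | smul r a ha => simp [ha]
  | lie a b ha hb =>
    rw [LieDerivation.apply_lie_eq_add, map_add, LieHom.map_lie, LieHom.map_lie, LieHom.map_lie,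
      ha, hb, leibniz_lie (of k x), add_comm]

open LieAlgebra.SemiDirectSum in
variable (k x) in
/-- The inverse of `(u, c • eliminationShift) ↦ eliminationInclusion u + c • x`. Letting all
derivations act in the target avoids a separate action of the line through `x`. -/
noncomputable def eliminationHom :
    FreeLieAlgebra k X →ₗ⁅k⁆ FreeLieAlgebra k (EliminationLetter x) ⋊⁅LieHom.id⁆
      LieDerivation k (FreeLieAlgebra k (EliminationLetter x))
        (FreeLieAlgebra k (EliminationLetter x)) :=
  open scoped Classical in
  lift k fun y ↦ if h : y = x then inr _ (eliminationShift k x) else inl _ (of k (0, ⟨y, h⟩))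

variable (k x) in
/-- The linear retraction of `eliminationInclusion` which kills `x`. -/
noncomputable def eliminationRetraction :
    FreeLieAlgebra k X →ₗ[k] FreeLieAlgebra k (EliminationLetter x) :=
  LieAlgebra.SemiDirectSum.projl _ ∘ₗ (eliminationHom k x).toLinearMap

theorem eliminationHom_of_self :
    eliminationHom k x (of k x) = LieAlgebra.SemiDirectSum.inr _ (eliminationShift k x) := by
  simp [eliminationHom]

theorem eliminationHom_comp_inclusion :
    (eliminationHom k x).comp (eliminationInclusion k x) = LieAlgebra.SemiDirectSum.inl _ := by
  ext ⟨i, y⟩ : 1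
  induction i with
  | zero => simp [eliminationHom, y.2]
  | succ i ih =>
    rw [LieHom.comp_apply] at ih ⊢
    rw [eliminationInclusion_of_succ, LieHom.map_lie, ih, eliminationHom_of_self]
    simp

theorem eliminationRetraction_of_self : eliminationRetraction k x (of k x) = 0 := by
  simp [eliminationRetraction, eliminationHom_of_self]

theorem eliminationRetraction_comp_inclusion :
    eliminationRetraction k x ∘ₗ (eliminationInclusion k x).toLinearMap = LinearMap.id := by
  ext u
  have hu := LieHom.congr_fun (eliminationHom_comp_inclusion (k := k) (x := x)) u
  simpa [eliminationRetraction] using congrArg (LieAlgebra.SemiDirectSum.projl _) hu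

variable (k x) in
/-- The coefficient of the letter `x` in an element of the free Lie algebra. -/
noncomputable def letterCoord : Module.Dual k (FreeLieAlgebra k X) :=
  LinearMap.proj x ∘ₗ (generatorCoords k X).toLinearMap

theorem letterCoord_of_self : letterCoord k x (of k x) = 1 := by
  simp [letterCoord]

theorem letterCoord_lie (a b : FreeLieAlgebra k X) : letterCoord k x ⁅a, b⁆ = 0 :=
  congrFun (generatorCoords_lie a b) x

theorem letterCoord_comp_inclusion :
    letterCoord k x ∘ₗ (eliminationInclusion k x).toLinearMap = 0 := by
  refine linearMap_ext_of_map_lie_eq_zero (by simp [letterCoord_lie]) (by simp) ?_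
  rintro ⟨_ | i, y⟩
  · simp [letterCoord, y.2.symm]
  · simp [letterCoord_lie]

end Elimination

section WedgeFiltration

variable {k : Type*} [CommRing k] {V W : Type*} [AddCommGroup V] [Module k V] [AddCommGroup W]
  [Module k W]

/-- The filtration of the `n`-th exterior power induced by a filtration `F` of `V`: level `N` is
spanned by the wedges `v₁ ∧ … ∧ vₙ` with `vᵢ ∈ F aᵢ` and `∑ aᵢ ≤ N`. -/
noncomputable def wedgeFiltration (F : ℤ → Submodule k V) :
    ℕ → ℤ → Submodule k (ExteriorAlgebra k V)
  | 0, N => if 0 ≤ N then 1 else ⊥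
  | n + 1, N => ⨆ a, (F a).map (ι k) * wedgeFiltration F n (N - a)

variable {F : ℤ → Submodule k V} {n : ℕ} {M N a b : ℤ}

theorem wedgeFiltration_zero (hN : 0 ≤ N) : wedgeFiltration F 0 N = 1 := if_pos hN

theorem one_mem_wedgeFiltration (hN : 0 ≤ N) : 1 ∈ wedgeFiltration F 0 N := by
  simp [wedgeFiltration_zero hN]

theorem ι_mul_mem_wedgeFiltration {v : V} {z : ExteriorAlgebra k V} (hv : v ∈ F a)
    (hz : z ∈ wedgeFiltration F n (N - a)) : ι k v * z ∈ wedgeFiltration F (n + 1) N :=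
  Submodule.mem_iSup_of_mem a (Submodule.mul_mem_mul (Submodule.mem_map_of_mem hv) hz)

theorem wedgeFiltration_succ_le {S : Submodule k (ExteriorAlgebra k V)}
    (h : ∀ a, ∀ v ∈ F a, ∀ z ∈ wedgeFiltration F n (N - a), ι k v * z ∈ S) :
    wedgeFiltration F (n + 1) N ≤ S := by
  refine iSup_le fun a ↦ Submodule.mul_le.mpr ?_
  rintro _ ⟨v, hv, rfl⟩ z hz
  exact h a v hv z hz

theorem wedgeFiltration_zero_le {S : Submodule k (ExteriorAlgebra k V)} (h : 0 ≤ N → 1 ∈ S) :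
    wedgeFiltration F 0 N ≤ S := by
  by_cases hN : 0 ≤ N
  · rw [wedgeFiltration_zero hN]
    exact Submodule.one_le.mpr (h hN)
  · simp [wedgeFiltration, hN]

theorem wedgeFiltration_mono (F : ℤ → Submodule k V) (n : ℕ) : Monotone (wedgeFiltration F n) := by
  induction n with
  | zero =>
    exact fun M N hMN ↦ wedgeFiltration_zero_le fun hM ↦ one_mem_wedgeFiltration (hM.trans hMN)
  | succ n ih =>
    exact fun M N hMN ↦ wedgeFiltration_succ_le fun a v hv z hz ↦
      ι_mul_mem_wedgeFiltration hv (ih (by gcongr) hz)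

theorem ι_mem_wedgeFiltration_one {v : V} (hv : v ∈ F N) : ι k v ∈ wedgeFiltration F 1 N := by
  simpa using ι_mul_mem_wedgeFiltration hv (one_mem_wedgeFiltration (sub_self N).ge)

theorem exists_ι_eq_of_mem_wedgeFiltration_one (hF : Monotone F) {z : ExteriorAlgebra k V}
    (hz : z ∈ wedgeFiltration F 1 N) : ∃ v ∈ F N, ι k v = z := by
  suffices h : wedgeFiltration F 1 N ≤ (F N).map (ι k) from h hz
  refine iSup_le fun a ↦ ?_
  by_cases ha : 0 ≤ N - a
  · rw [wedgeFiltration_zero ha, mul_one]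
    exact Submodule.map_mono (hF (by linarith))
  · simp [wedgeFiltration, sub_nonneg.not.mp ha]

theorem wedgeFiltration_le_exteriorPower (F : ℤ → Submodule k V) (n : ℕ) (N : ℤ) :
    wedgeFiltration F n N ≤ ⋀[k]^n V := by
  induction n generalizing N with
  | zero => exact wedgeFiltration_zero_le fun _ ↦ by simp
  | succ n ih =>
    exact wedgeFiltration_succ_le fun a v _ z hz ↦ ι_mul_mem_exteriorPower v (ih _ hz)

theorem wedgeFiltration_eq_bot_of_neg (hF : ∀ a < 0, F a = ⊥) (hN : N < 0) :
    wedgeFiltration F n N = ⊥ := by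
  induction n generalizing N with
  | zero => exact if_neg hN.not_ge
  | succ n ih =>
    refine eq_bot_iff.mpr (wedgeFiltration_succ_le fun a v hv z hz ↦ ?_)
    obtain ha | ha := lt_or_ge a 0
    · rw [hF a ha, Submodule.mem_bot] at hv
      simp [hv]
    · rw [ih (by linarith), Submodule.mem_bot] at hz
      simp [hz]

theorem wedgeFiltration_succ_eq_bot (hM : 0 ≤ M) (hF : ∀ a < M, F a = ⊥) (hN : N < M) :
    wedgeFiltration F (n + 1) N = ⊥ := by
  refine eq_bot_iff.mpr (wedgeFiltration_succ_le fun a v hv z hz ↦ ?_)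
  obtain ha | ha := lt_or_ge a M
  · rw [hF a ha, Submodule.mem_bot] at hv
    simp [hv]
  · rw [wedgeFiltration_eq_bot_of_neg (fun b hb ↦ hF b (hb.trans_le hM)) (by linarith),
      Submodule.mem_bot] at hz
    simp [hz]

theorem map_mem_wedgeFiltration {G : ℤ → Submodule k W} {j : V →ₗ[k] W}
    (hj : ∀ a, ∀ v ∈ F a, j v ∈ G a) {z : ExteriorAlgebra k V} (hz : z ∈ wedgeFiltration F n N) :
    map j z ∈ wedgeFiltration G n N := by
  suffices h : wedgeFiltration F n N ≤ (wedgeFiltration G n N).comap (map j).toLinearMap from h hz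
  clear hz
  induction n generalizing N with
  | zero => exact wedgeFiltration_zero_le fun hN ↦ by simpa using one_mem_wedgeFiltration hN
  | succ n ih =>
    refine wedgeFiltration_succ_le fun a v hv z hz ↦ ?_
    simpa using ι_mul_mem_wedgeFiltration (hj a v hv) (ih hz)

theorem derivationExtension_mem_wedgeFiltration {f : Module.End k V} {c : ℤ}
    (hf : ∀ a, ∀ v ∈ F a, f v ∈ F (a + c)) {z : ExteriorAlgebra k V}
    (hz : z ∈ wedgeFiltration F n N) : derivationExtension f z ∈ wedgeFiltration F n (N + c) := by
  suffices h : wedgeFiltration F n N ≤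
      (wedgeFiltration F n (N + c)).comap (derivationExtension f) from h hz
  clear hz
  induction n generalizing N with
  | zero => exact wedgeFiltration_zero_le fun _ ↦ by simp
  | succ n ih =>
    refine wedgeFiltration_succ_le fun a v hv z hz ↦ ?_
    rw [Submodule.mem_comap, derivationExtension_ι_mul]
    refine add_mem (ι_mul_mem_wedgeFiltration (hf a v hv) ?_) (ι_mul_mem_wedgeFiltration hv ?_)
    · rwa [add_sub_add_right_eq_sub]
    · rw [← sub_add_eq_add_sub]
      exact ih hz

end WedgeFiltration

section WeightFiltration

variable {k : Type*} [CommRing k] {X : Type*}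

/-- A filtration of the free Lie algebra compatible with the bracket and with the weights `w` of
the letters. -/
structure IsWeightFiltration (w : X → ℤ) (F : ℤ → Submodule k (FreeLieAlgebra k X)) : Prop where
  mono : Monotone F
  of_mem (x : X) : of k x ∈ F (w x)
  lie_mem {a b : ℤ} {u v : FreeLieAlgebra k X} : u ∈ F a → v ∈ F b → ⁅u, v⁆ ∈ F (a + b)

variable (k) in
/-- The smallest weight filtration: level `N` is spanned by the Lie monomials of weight at most
`N`. -/
noncomputable def weightFiltration (w : X → ℤ) (N : ℤ) : Submodule k (FreeLieAlgebra k X) :=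
  ⨅ F : {F : ℤ → Submodule k (FreeLieAlgebra k X) // IsWeightFiltration w F}, F.1 N

variable {w : X → ℤ} {F : ℤ → Submodule k (FreeLieAlgebra k X)} {N : ℤ}

theorem IsWeightFiltration.weightFiltration_le (hF : IsWeightFiltration w F) (N : ℤ) :
    weightFiltration k w N ≤ F N :=
  iInf_le _ (⟨F, hF⟩ : {F : ℤ → Submodule k (FreeLieAlgebra k X) // IsWeightFiltration w F})

variable (k) in
theorem isWeightFiltration_weightFiltration (w : X → ℤ) :
    IsWeightFiltration w (weightFiltration k w) where
  mono _ _ hMN := iInf_mono fun F ↦ F.2.mono hMN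
  of_mem x := Submodule.mem_iInf _ |>.mpr fun F ↦ F.2.of_mem x
  lie_mem hu hv := Submodule.mem_iInf _ |>.mpr fun F ↦
    F.2.lie_mem (F.2.weightFiltration_le _ hu) (F.2.weightFiltration_le _ hv)

/-- Minimality of the weight filtration, with the hypothesis on brackets weakened so that it works
as an induction principle. -/
theorem weightFiltration_le_of_lie_mem (mono : Monotone F) (of_mem : ∀ x, of k x ∈ F (w x))
    (lie_mem : ∀ a b, ∀ u ∈ weightFiltration k w a, ∀ v ∈ weightFiltration k w b,
      u ∈ F a → v ∈ F b → ⁅u, v⁆ ∈ F (a + b)) (N : ℤ) :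
    weightFiltration k w N ≤ F N := by
  have hw := isWeightFiltration_weightFiltration k w
  have hF : IsWeightFiltration w (weightFiltration k w ⊓ F) :=
    { mono := hw.mono.inf mono
      of_mem := fun x ↦ ⟨hw.of_mem x, of_mem x⟩
      lie_mem := fun hu hv ↦
        ⟨hw.lie_mem hu.1 hv.1, lie_mem _ _ _ hu.1 _ hv.1 hu.2 hv.2⟩ }
  exact (hF.weightFiltration_le N).trans inf_le_right

theorem weightFiltration_eq_bot {m : ℤ} (hm : 0 ≤ m) (hw : ∀ x, m ≤ w x) (hN : N < m) :
    weightFiltration k w N = ⊥ := by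
  have hF : IsWeightFiltration (k := k) w fun a ↦ if m ≤ a then ⊤ else ⊥ :=
    { mono := fun a b hab ↦ by
        dsimp only
        split_ifs <;> first | exact le_rfl | exact bot_le | omega
      of_mem := fun x ↦ by simp [hw x]
      lie_mem := fun {a b u v} hu hv ↦ by
        obtain h | ha | hb : m ≤ a + b ∨ ¬m ≤ a ∨ ¬m ≤ b := by omega
        · simp [h]
        · simp_all
        · simp_all }
  exact eq_bot_iff.mpr ((hF.weightFiltration_le N).trans (if_neg hN.not_ge).le)

theorem derivation_mem_weightFiltration
    {D : LieDerivation k (FreeLieAlgebra k X) (FreeLieAlgebra k X)} {c : ℤ}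
    (hD : ∀ x, D (of k x) ∈ weightFiltration k w (w x + c)) {u : FreeLieAlgebra k X}
    (hu : u ∈ weightFiltration k w N) : D u ∈ weightFiltration k w (N + c) := by
  have hw := isWeightFiltration_weightFiltration k w
  refine weightFiltration_le_of_lie_mem
    (F := fun a ↦ (weightFiltration k w (a + c)).comap D.toLinearMap)
    (fun a b hab ↦ Submodule.comap_mono (hw.mono (by gcongr))) hD ?_ N hu
  intro a b u hu v hv hDu hDv
  change D ⁅u, v⁆ ∈ weightFiltration k w (a + b + c)
  rw [D.apply_lie_eq_add]
  refine add_mem ?_ ?_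
  · rw [add_assoc]
    exact hw.lie_mem hu hDv
  · rw [add_right_comm]
    exact hw.lie_mem hDu hv

variable (k) in
/-- The filtration of the `n`-th exterior power of the free Lie algebra by total weight. -/
noncomputable abbrev chainFiltration (w : X → ℤ) (n : ℕ) (N : ℤ) :
    Submodule k (ExteriorAlgebra k (FreeLieAlgebra k X)) :=
  wedgeFiltration (weightFiltration k w) n N

/-- Brackets are boundaries, so modulo boundaries only the generators survive in degree one. -/
theorem exists_ι_eq_ι_linearCombination_add_differential {v : FreeLieAlgebra k X}
    (hv : v ∈ weightFiltration k w N) :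
    ∃ g : X →₀ k, ∃ u ∈ chainFiltration k w 2 N,
      ι k v = ι k (Finsupp.linearCombination k (of k) g) + differential k _ u := by
  let F (N : ℤ) : Submodule k (FreeLieAlgebra k X) :=
    (LinearMap.range (ι k ∘ₗ Finsupp.linearCombination k (of k)) ⊔
      (chainFiltration k w 2 N).map (differential k _)).comap (ι k)
  suffices h : v ∈ F N by
    obtain ⟨_, ⟨g, rfl⟩, _, ⟨u, hu, rfl⟩, h⟩ := Submodule.mem_sup.mp h
    exact ⟨g, u, hu, h.symm⟩
  refine weightFiltration_le_of_lie_mem (F := F) ?_ ?_ ?_ N hv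
  · exact fun a b hab ↦ Submodule.comap_mono
      (sup_le_sup_left (Submodule.map_mono (wedgeFiltration_mono _ 2 hab)) _)
  · exact fun x ↦ Submodule.mem_sup_left ⟨Finsupp.single x 1, by simp⟩
  · intro a b u hu v hv _ _
    refine Submodule.mem_sup_right ⟨ι k u * ι k v, ?_, differential_ι_mul_ι u v⟩
    exact ι_mul_mem_wedgeFiltration hu (ι_mem_wedgeFiltration_one (by simpa using hv))

theorem exists_differential_eq_ι_of_generatorCoords_eq_zero {v : FreeLieAlgebra k X}
    (hv : v ∈ weightFiltration k w N) (hv₀ : generatorCoords k X v = 0) :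
    ∃ u ∈ chainFiltration k w 2 N, differential k _ u = ι k v := by
  obtain ⟨g, u, hu, h⟩ := exists_ι_eq_ι_linearCombination_add_differential hv
  have hg : ι k (⇑g) = 0 := by
    have := congrArg (map (generatorCoords k X).toLinearMap) h
    rw [map_add, map_differential_eq_zero generatorCoords_lie] at this
    simpa [hv₀, generatorCoords_linearCombination] using this.symm
  have hg : g = 0 := DFunLike.coe_injective ((ι_eq_zero_iff _).mp hg)
  exact ⟨u, hu, by simp [h, hg]⟩

end WeightFiltration

section EliminationFiltration

variable {k : Type*} [CommRing k] {X : Type*}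

/-- The weight `w y + i * w x` of the elimination letter `ad(x)ⁱ y`. -/
def eliminationWeight (w : X → ℤ) (x : X) (p : EliminationLetter x) : ℤ := w p.2 + p.1 * w x

variable {w : X → ℤ} {x : X} {n : ℕ} {N a b : ℤ}

theorem eliminationWeight_succ (w : X → ℤ) (x : X) (i : ℕ) (y : {y : X // y ≠ x}) :
    eliminationWeight w x (i + 1, y) = eliminationWeight w x (i, y) + w x := by
  simp only [eliminationWeight]
  push_cast
  ring

variable (k x) in
/-- The map `eliminationInclusion` on exterior algebras. -/
noncomputable abbrev exteriorInclusion :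
    ExteriorAlgebra k (FreeLieAlgebra k (EliminationLetter x)) →ₐ[k]
      ExteriorAlgebra k (FreeLieAlgebra k X) :=
  map (eliminationInclusion k x).toLinearMap

theorem eliminationShift_mem_weightFiltration {u : FreeLieAlgebra k (EliminationLetter x)}
    (hu : u ∈ weightFiltration k (eliminationWeight w x) N) :
    eliminationShift k x u ∈ weightFiltration k (eliminationWeight w x) (N + w x) := by
  refine derivation_mem_weightFiltration (fun ⟨i, y⟩ ↦ ?_) hu
  rw [eliminationShift_of, ← eliminationWeight_succ]
  exact (isWeightFiltration_weightFiltration k _).of_mem (i + 1, y)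

theorem derivationExtension_eliminationShift_mem
    {z : ExteriorAlgebra k (FreeLieAlgebra k (EliminationLetter x))}
    (hz : z ∈ chainFiltration k (eliminationWeight w x) n N) :
    derivationExtension (eliminationShift k x) z ∈
      chainFiltration k (eliminationWeight w x) n (N + w x) :=
  derivationExtension_mem_wedgeFiltration (f := (eliminationShift k x).toLinearMap)
    (fun _ _ hu ↦ eliminationShift_mem_weightFiltration hu) hz

theorem eliminationInclusion_of_mem_weightFiltration (w : X → ℤ) (p : EliminationLetter x) :
    eliminationInclusion k x (of k p) ∈ weightFiltration k w (eliminationWeight w x p) := by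
  have hw := isWeightFiltration_weightFiltration k w
  obtain ⟨i, y⟩ := p
  induction i with
  | zero => simpa [eliminationWeight] using hw.of_mem y.1
  | succ i ih =>
    rw [eliminationInclusion_of_succ, eliminationWeight_succ, add_comm]
    exact hw.lie_mem (hw.of_mem x) ih

theorem eliminationInclusion_mem_weightFiltration {u : FreeLieAlgebra k (EliminationLetter x)}
    (hu : u ∈ weightFiltration k (eliminationWeight w x) N) :
    eliminationInclusion k x u ∈ weightFiltration k w N := by
  have hw := isWeightFiltration_weightFiltration k w
  have hF : IsWeightFiltration (eliminationWeight w x) fun N ↦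
      (weightFiltration k w N).comap (eliminationInclusion k x).toLinearMap :=
    { mono := fun _ _ hab ↦ Submodule.comap_mono (hw.mono hab)
      of_mem := eliminationInclusion_of_mem_weightFiltration w
      lie_mem := fun hu hv ↦ by
        simp only [Submodule.mem_comap, LieHom.coe_toLinearMap, LieHom.map_lie] at hu hv ⊢
        exact hw.lie_mem hu hv }
  exact hF.weightFiltration_le N hu

theorem exteriorInclusion_mem_chainFiltration
    {z : ExteriorAlgebra k (FreeLieAlgebra k (EliminationLetter x))}
    (hz : z ∈ chainFiltration k (eliminationWeight w x) n N) :
    exteriorInclusion k x z ∈ chainFiltration k w n N :=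
  map_mem_wedgeFiltration (fun _ _ ↦ eliminationInclusion_mem_weightFiltration) hz

variable (k) in
/-- The weight filtration of the line through the letter `x`. -/
noncomputable def letterLine (w : X → ℤ) (x : X) (N : ℤ) : Submodule k (FreeLieAlgebra k X) :=
  if w x ≤ N then k ∙ of k x else ⊥

theorem exists_smul_of_mem_letterLine {p : FreeLieAlgebra k X} (hp : p ∈ letterLine k w x N) :
    ∃ r : k, p = r • of k x ∧ (w x ≤ N ∨ r = 0) := by
  unfold letterLine at hp
  split_ifs at hp with hN
  · obtain ⟨r, rfl⟩ := Submodule.mem_span_singleton.mp hp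
    exact ⟨r, rfl, .inl hN⟩
  · exact ⟨0, by simpa using hp, .inr rfl⟩

theorem letterLine_mono : Monotone (letterLine k w x) := by
  intro a b hab
  by_cases ha : w x ≤ a
  · simp [letterLine, ha, ha.trans hab]
  · simp [letterLine, ha]

theorem letterLine_lie_eliminationInclusion_mem {p : FreeLieAlgebra k X}
    {u : FreeLieAlgebra k (EliminationLetter x)} (hp : p ∈ letterLine k w x a)
    (hu : u ∈ weightFiltration k (eliminationWeight w x) b) :
    ⁅p, eliminationInclusion k x u⁆ ∈
      (weightFiltration k (eliminationWeight w x) (a + b)).map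
        (eliminationInclusion k x).toLinearMap := by
  obtain ⟨r, rfl, ha | rfl⟩ := exists_smul_of_mem_letterLine hp
  · rw [smul_lie, ← eliminationInclusion_shift]
    refine Submodule.smul_mem _ r ⟨eliminationShift k x u, ?_, rfl⟩
    exact (isWeightFiltration_weightFiltration k _).mono (by linarith)
      (eliminationShift_mem_weightFiltration hu)
  · simp

theorem letterLine_lie_letterLine {p q : FreeLieAlgebra k X} (hp : p ∈ letterLine k w x a)
    (hq : q ∈ letterLine k w x b) : ⁅p, q⁆ = 0 := by
  obtain ⟨r, rfl, -⟩ := exists_smul_of_mem_letterLine hp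
  obtain ⟨s, rfl, -⟩ := exists_smul_of_mem_letterLine hq
  simp

theorem weightFiltration_le_map_eliminationInclusion_sup_letterLine (w : X → ℤ) (x : X) (N : ℤ) :
    weightFiltration k w N ≤
      (weightFiltration k (eliminationWeight w x) N).map (eliminationInclusion k x).toLinearMap ⊔
        letterLine k w x N := by
  have hw := isWeightFiltration_weightFiltration k (eliminationWeight w x)
  refine IsWeightFiltration.weightFiltration_le
    (F := fun N ↦ (weightFiltration k (eliminationWeight w x) N).map
      (eliminationInclusion k x).toLinearMap ⊔ letterLine k w x N)
    ⟨fun a b hab ↦ sup_le_sup (Submodule.map_mono (hw.mono hab)) (letterLine_mono hab),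
      fun y ↦ ?_, fun {a b u v} hu hv ↦ ?_⟩ N
  · obtain rfl | hy := eq_or_ne y x
    · exact Submodule.mem_sup_right (by simp [letterLine, Submodule.mem_span_singleton_self])
    · refine Submodule.mem_sup_left ⟨of k (0, ⟨y, hy⟩), ?_, by simp⟩
      simpa [eliminationWeight] using hw.of_mem (0, ⟨y, hy⟩)
  · obtain ⟨_, ⟨u, hu', rfl⟩, p, hp, rfl⟩ := Submodule.mem_sup.mp hu
    obtain ⟨_, ⟨v, hv', rfl⟩, q, hq, rfl⟩ := Submodule.mem_sup.mp hv
    refine Submodule.mem_sup_left ?_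
    simp only [LieHom.coe_toLinearMap]
    rw [lie_add, add_lie, add_lie, letterLine_lie_letterLine hp hq, add_zero]
    refine add_mem (add_mem ⟨⁅u, v⁆, hw.lie_mem hu' hv', LieHom.map_lie ..⟩
      (letterLine_lie_eliminationInclusion_mem hp hv')) ?_
    rw [← lie_skew, add_comm a]
    exact neg_mem (letterLine_lie_eliminationInclusion_mem hq hu')

variable (k) in
/-- The elements `x ∧ j z` of level `N`, where `j` is the inclusion of Lazard elimination and `z`
has degree `n`. -/
noncomputable def letterWedge (w : X → ℤ) (x : X) (n : ℕ) (N : ℤ) :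
    Submodule k (ExteriorAlgebra k (FreeLieAlgebra k X)) :=
  (chainFiltration k (eliminationWeight w x) n (N - w x)).map
    (LinearMap.mulLeft k (ι k (of k x)) ∘ₗ (exteriorInclusion k x).toLinearMap)

theorem ι_mul_exteriorInclusion_mem {v : FreeLieAlgebra k X}
    (hv : v ∈ weightFiltration k w a)
    {z : ExteriorAlgebra k (FreeLieAlgebra k (EliminationLetter x))}
    (hz : z ∈ chainFiltration k (eliminationWeight w x) n (N - a)) :
    ι k v * exteriorInclusion k x z ∈
      (chainFiltration k (eliminationWeight w x) (n + 1) N).map (exteriorInclusion k x).toLinearMap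
        ⊔ letterWedge k w x n N := by
  obtain ⟨_, ⟨u, hu, rfl⟩, p, hp, rfl⟩ := Submodule.mem_sup.mp
    (weightFiltration_le_map_eliminationInclusion_sup_letterLine w x a hv)
  rw [map_add, add_mul]
  refine Submodule.add_mem_sup ⟨ι k u * z, ι_mul_mem_wedgeFiltration hu hz, by simp⟩ ?_
  obtain ⟨r, rfl, ha | rfl⟩ := exists_smul_of_mem_letterLine hp
  · exact ⟨r • z, Submodule.smul_mem _ r (wedgeFiltration_mono _ n (by linarith) hz), by simp⟩
  · simp

theorem ι_mul_letterWedge_mem {v : FreeLieAlgebra k X}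
    {z : ExteriorAlgebra k (FreeLieAlgebra k X)} (hv : v ∈ weightFiltration k w a)
    (hz : z ∈ letterWedge k w x n (N - a)) : ι k v * z ∈ letterWedge k w x (n + 1) N := by
  obtain ⟨_, ⟨u, hu, rfl⟩, p, hp, rfl⟩ := Submodule.mem_sup.mp
    (weightFiltration_le_map_eliminationInclusion_sup_letterLine w x a hv)
  obtain ⟨r, rfl, -⟩ := exists_smul_of_mem_letterLine hp
  obtain ⟨z, hz, rfl⟩ := hz
  refine ⟨-(ι k u * z), neg_mem (ι_mul_mem_wedgeFiltration hu ?_), ?_⟩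
  · rwa [sub_right_comm]
  · simp only [LinearMap.comp_apply, LinearMap.mulLeft_apply, AlgHom.toLinearMap_apply, map_neg,
      map_mul, map_apply_ι, map_add, map_smul, add_mul, smul_mul_assoc, ι_mul_ι_mul_self, smul_zero,
      add_zero]
    exact (ι_mul_ι_mul _ _ _).symm

theorem chainFiltration_succ_le (w : X → ℤ) (x : X) (n : ℕ) (N : ℤ) :
    chainFiltration k w (n + 1) N ≤
      (chainFiltration k (eliminationWeight w x) (n + 1) N).map (exteriorInclusion k x).toLinearMap
        ⊔ letterWedge k w x n N := by
  induction n generalizing N with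
  | zero =>
    refine wedgeFiltration_succ_le fun a v hv z hz ↦ ?_
    have hle : chainFiltration k w 0 (N - a) ≤
        (chainFiltration k (eliminationWeight w x) 0 (N - a)).map
          (exteriorInclusion k x).toLinearMap :=
      wedgeFiltration_zero_le fun ha ↦
        Submodule.mem_map.mpr ⟨1, one_mem_wedgeFiltration ha, map_one (exteriorInclusion k x)⟩
    obtain ⟨z', hz', rfl⟩ := hle hz
    exact ι_mul_exteriorInclusion_mem hv hz'
  | succ n ih =>
    refine wedgeFiltration_succ_le fun a v hv z hz ↦ ?_
    obtain ⟨_, ⟨z', hz', rfl⟩, y, hy, rfl⟩ := Submodule.mem_sup.mp (ih _ hz)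
    rw [mul_add]
    exact add_mem (ι_mul_exteriorInclusion_mem hv hz')
      (Submodule.mem_sup_right (ι_mul_letterWedge_mem hv hy))

theorem exists_eq_exteriorInclusion_add_ι_mul {z : ExteriorAlgebra k (FreeLieAlgebra k X)}
    (x : X) (hz : z ∈ chainFiltration k w (n + 1) N) :
    ∃ z₀ ∈ chainFiltration k (eliminationWeight w x) (n + 1) N,
      ∃ z₁ ∈ chainFiltration k (eliminationWeight w x) n (N - w x),
        z = exteriorInclusion k x z₀ + ι k (of k x) * exteriorInclusion k x z₁ := by
  obtain ⟨_, ⟨z₀, hz₀, rfl⟩, _, ⟨z₁, hz₁, rfl⟩, rfl⟩ :=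
    Submodule.mem_sup.mp (chainFiltration_succ_le w x n N hz)
  exact ⟨z₀, hz₀, z₁, hz₁, rfl⟩

end EliminationFiltration

section Exactness

universe u

variable {k : Type*} [CommRing k] {X : Type*} {w : X → ℤ} {x : X} {n : ℕ} {M N : ℤ}

theorem differential_exteriorInclusion_add_ι_mul
    (z₀ z₁ : ExteriorAlgebra k (FreeLieAlgebra k (EliminationLetter x))) :
    differential k _ (exteriorInclusion k x z₀ + ι k (of k x) * exteriorInclusion k x z₁) =
      exteriorInclusion k x (differential k _ z₀ + derivationExtension (eliminationShift k x) z₁) +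
        ι k (of k x) * exteriorInclusion k x (-differential k _ z₁) := by
  have had : exteriorInclusion k x (derivationExtension (eliminationShift k x) z₁) =
      adExterior (of k x) (exteriorInclusion k x z₁) :=
    map_derivationExtension eliminationInclusion_shift z₁
  rw [map_add, differential_ι_mul, map_add, had, map_neg, map_differential, map_differential]
  noncomm_ring

theorem differential_eq_zero_of_elimination
    {z₀ z₁ : ExteriorAlgebra k (FreeLieAlgebra k (EliminationLetter x))}
    (h : differential k _
      (exteriorInclusion k x z₀ + ι k (of k x) * exteriorInclusion k x z₁) = 0) :
    differential k _ z₀ + derivationExtension (eliminationShift k x) z₁ = 0 ∧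
      differential k _ z₁ = 0 := by
  rw [differential_exteriorInclusion_add_ι_mul] at h
  obtain ⟨h₀, h₁⟩ := eq_zero_of_map_add_ι_mul_map_eq_zero eliminationRetraction_comp_inclusion
    eliminationRetraction_of_self letterCoord_comp_inclusion letterCoord_of_self h
  exact ⟨h₀, neg_eq_zero.mp h₁⟩

/-- The shift moves the letter `(i, y)` to `(i + 1, y)`, hence is injective modulo brackets. -/
theorem generatorCoords_eq_zero_of_differential_add_ι_shift
    {z : ExteriorAlgebra k (FreeLieAlgebra k (EliminationLetter x))}
    {v : FreeLieAlgebra k (EliminationLetter x)}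
    (h : differential k _ z + ι k (eliminationShift k x v) = 0) :
    generatorCoords k (EliminationLetter x) v = 0 := by
  let q : FreeLieAlgebra k (EliminationLetter x) →ₗ[k] EliminationLetter x → k :=
    LinearMap.funLeft k k (fun p ↦ (p.1 + 1, p.2)) ∘ₗ (generatorCoords k _).toLinearMap
  have hq (u v : FreeLieAlgebra k (EliminationLetter x)) : q ⁅u, v⁆ = 0 :=
    (congrArg (LinearMap.funLeft k k _) (generatorCoords_lie u v)).trans (map_zero _)
  have hqshift : q ∘ₗ (eliminationShift k x).toLinearMap = (generatorCoords k _).toLinearMap := by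
    refine linearMap_ext_of_map_lie_eq_zero (fun u v ↦ ?_) generatorCoords_lie fun p ↦ ?_
    · simp [hq]
    · ext ⟨i, y⟩
      have hsucc : ((i + 1, y) : EliminationLetter x) = (p.1 + 1, p.2) ↔ (i, y) = p := by
        simp [Prod.ext_iff]
      simp only [q, LinearMap.comp_apply, LieHom.coe_toLinearMap, LieDerivation.coeFn_coe,
        eliminationShift_of, generatorCoords_of, LinearMap.funLeft_apply, Pi.single_apply]
      by_cases h : (i, y) = p
      · rw [if_pos h, if_pos (hsucc.mpr h)]
      · rw [if_neg h, if_neg (hsucc.not.mpr h)]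
  have hι : ι k (q (eliminationShift k x v)) = 0 := by
    simpa [map_differential_eq_zero hq] using congrArg (map q) h
  rw [← LieHom.coe_toLinearMap, ← hqshift]
  exact (ι_eq_zero_iff _).mp hι

/-- The Chevalley–Eilenberg complex of the free Lie algebra on letters of weights `w` is exact in
degrees at least two and weights at most `N`, weight bounds being preserved. -/
def ExactUpTo (k : Type*) [CommRing k] {X : Type*} (w : X → ℤ) (N : ℤ) : Prop :=
  ∀ n : ℕ, ∀ M ≤ N, ∀ z ∈ chainFiltration k w (n + 2) M, differential k _ z = 0 →
    ∃ u ∈ chainFiltration k w (n + 3) M, differential k _ u = z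

theorem exists_differential_eq_of_elimination (hx : 0 ≤ w x)
    (hexact : ExactUpTo k (eliminationWeight w x) N) (hM : M ≤ N)
    {z₀ z₁ : ExteriorAlgebra k (FreeLieAlgebra k (EliminationLetter x))}
    (hz₁ : z₁ ∈ chainFiltration k (eliminationWeight w x) (n + 1) (M - w x))
    (h₀ : differential k _ z₀ + derivationExtension (eliminationShift k x) z₁ = 0)
    (h₁ : differential k _ z₁ = 0) :
    ∃ u₁ ∈ chainFiltration k (eliminationWeight w x) (n + 2) (M - w x),
      differential k _ u₁ = z₁ := by
  cases n with
  | zero =>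
    obtain ⟨v, hv, rfl⟩ := exists_ι_eq_of_mem_wedgeFiltration_one
      (isWeightFiltration_weightFiltration k _).mono hz₁
    rw [derivationExtension_ι] at h₀
    exact exists_differential_eq_ι_of_generatorCoords_eq_zero hv
      (generatorCoords_eq_zero_of_differential_add_ι_shift h₀)
  | succ n => exact hexact n _ (by linarith) z₁ hz₁ h₁

theorem ExactUpTo.of_elimination (hx : 0 ≤ w x) (hexact : ExactUpTo k (eliminationWeight w x) N) :
    ExactUpTo k w N := by
  intro n M hM z hz hdz
  obtain ⟨z₀, hz₀, z₁, hz₁, rfl⟩ := exists_eq_exteriorInclusion_add_ι_mul x hz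
  obtain ⟨h₀, h₁⟩ := differential_eq_zero_of_elimination hdz
  obtain ⟨u₁, hu₁, rfl⟩ := exists_differential_eq_of_elimination hx hexact hM hz₁ h₀ h₁
  have hshift : derivationExtension (eliminationShift k x) u₁ ∈
      chainFiltration k (eliminationWeight w x) (n + 2) M := by
    simpa using derivationExtension_eliminationShift_mem hu₁
  have hd : differential k _ (z₀ + derivationExtension (eliminationShift k x) u₁) = 0 := by
    rw [map_add, differential_derivationExtension, h₀]
  obtain ⟨u₀, hu₀, hdu₀⟩ := hexact n M hM _ (add_mem hz₀ hshift) hd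
  refine ⟨exteriorInclusion k x u₀ + ι k (of k x) * exteriorInclusion k x (-u₁),
    add_mem ?_ ?_, ?_⟩
  · exact exteriorInclusion_mem_chainFiltration hu₀
  · exact ι_mul_mem_wedgeFiltration ((isWeightFiltration_weightFiltration k w).of_mem x)
      (exteriorInclusion_mem_chainFiltration (neg_mem hu₁))
  · rw [differential_exteriorInclusion_add_ι_mul, hdu₀]
    simp

theorem exactUpTo_of_lt (hN : 0 ≤ N) (hw : ∀ x, N < w x) : ExactUpTo k w N := by
  intro n M hM z hz _
  have hbot : chainFiltration k w (n + 2) M = ⊥ :=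
    wedgeFiltration_succ_eq_bot (M := N + 1) (by linarith)
      (fun a ha ↦ weightFiltration_eq_bot (by linarith) hw ha) (by linarith)
  rw [hbot, Submodule.mem_bot] at hz
  exact ⟨0, zero_mem _, by rw [hz, map_zero]⟩

theorem le_eliminationWeight (hx : 0 ≤ w x) (p : EliminationLetter x) :
    w p.2 ≤ eliminationWeight w x p :=
  le_add_of_nonneg_right (by positivity)

theorem finite_setOf_eliminationWeight_le (hx : 0 < w x) (hw : ∀ y, 0 ≤ w y)
    (hfin : {y | w y ≤ N}.Finite) : {p | eliminationWeight w x p ≤ N}.Finite := by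
  have hy : {y : {y : X // y ≠ x} | w y ≤ N}.Finite :=
    Set.Finite.preimage (f := Subtype.val) Subtype.val_injective.injOn hfin
  refine ((Set.finite_le_nat N.toNat).prod hy).subset fun p hp ↦ ⟨?_, ?_⟩
  · have hi : (p.1 : ℤ) * w x ≤ N := (le_add_of_nonneg_left (hw p.2)).trans hp
    have : (p.1 : ℤ) ≤ N := by nlinarith
    simp only [Set.mem_ofPred_eq]
    omega
  · exact (le_eliminationWeight hx.le p).trans hp

theorem eliminationWeight_eq_iff (hx : 0 < w x) (hw : ∀ y, w x ≤ w y) {p : EliminationLetter x} :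
    eliminationWeight w x p = w x ↔ p.1 = 0 ∧ w p.2 = w x := by
  refine ⟨fun hp ↦ ?_, fun ⟨hi, hy⟩ ↦ by simp [eliminationWeight, hi, hy]⟩
  have hi : p.1 = 0 := by
    by_contra hi
    have : w x ≤ p.1 * w x := le_mul_of_one_le_left hx.le (mod_cast Nat.one_le_iff_ne_zero.mpr hi)
    linarith [hw p.2, hp.le, show eliminationWeight w x p = w p.2 + p.1 * w x from rfl]
  exact ⟨hi, by simpa [eliminationWeight, hi] using hp⟩

theorem ncard_setOf_eliminationWeight_eq_add_one (hx : 0 < w x) (hw : ∀ y, w x ≤ w y)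
    (hfin : {y | w y = w x}.Finite) :
    {p | eliminationWeight w x p = w x}.ncard + 1 = {y | w y = w x}.ncard := by
  have himage : (fun p : EliminationLetter x ↦ p.2.1) '' {p | eliminationWeight w x p = w x} =
      {y | w y = w x} \ {x} := by
    ext y
    simp only [Set.mem_image, Set.mem_ofPred_eq, eliminationWeight_eq_iff hx hw, Set.mem_sdiff,
      Set.mem_singleton_iff]
    exact ⟨fun ⟨p, ⟨_, hp⟩, hpy⟩ ↦ hpy ▸ ⟨hp, p.2.2⟩,
      fun ⟨hy, hyx⟩ ↦ ⟨(0, ⟨y, hyx⟩), ⟨rfl, hy⟩, rfl⟩⟩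
  have hinj : Set.InjOn (fun p : EliminationLetter x ↦ p.2.1)
      {p | eliminationWeight w x p = w x} := by
    intro p hp q hq hpq
    have hp := (eliminationWeight_eq_iff hx hw).mp hp
    have hq := (eliminationWeight_eq_iff hx hw).mp hq
    exact Prod.ext (hp.1.trans hq.1.symm) (Subtype.ext hpq)
  rw [← hinj.ncard_image, himage]
  exact Set.ncard_sdiff_singleton_add_one rfl hfin

/-- Eliminating a letter of minimal weight decreases the number of such letters, so that the minimal
weight can be raised until it exceeds `N`. -/
theorem exactUpTo_of_forall_lt {m : ℤ} (hm : 0 < m)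
    (ih : ∀ {X : Type u} (w : X → ℤ), {x | w x ≤ N}.Finite → (∀ x, m < w x) → ExactUpTo k w N)
    (hmN : m ≤ N) {X : Type u} (w : X → ℤ) (hfin : {x | w x ≤ N}.Finite) (hw : ∀ x, m ≤ w x) :
    ExactUpTo k w N := by
  have hfin' : {x | w x = m}.Finite := hfin.subset fun x hx ↦ hx.le.trans hmN
  induction hc : {x | w x = m}.ncard generalizing X with
  | zero =>
    have hempty := (Set.ncard_eq_zero hfin').mp hc
    exact ih w hfin fun x ↦ (hw x).lt_of_ne' fun hx ↦ hempty.le hx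
  | succ c ihc =>
    obtain ⟨x, rfl⟩ := Set.nonempty_of_ncard_ne_zero (hc.trans_ne c.succ_ne_zero)
    have hfin_elim := finite_setOf_eliminationWeight_le hm (fun y ↦ hm.le.trans (hw y)) hfin
    have hcard := ncard_setOf_eliminationWeight_eq_add_one hm hw hfin'
    exact .of_elimination hm.le <| ihc (eliminationWeight w x) hfin_elim
      (fun p ↦ (hw p.2).trans (le_eliminationWeight hm.le p))
      (hfin_elim.subset fun p hp ↦ hp.le.trans hmN) (by omega)

theorem exactUpTo_of_finite (hN : 0 ≤ N) {X : Type u} {w : X → ℤ} (hfin : {x | w x ≤ N}.Finite)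
    (hw : ∀ x, 0 < w x) : ExactUpTo k w N := by
  suffices h : ∀ m ≤ N + 1, 0 < m → ∀ {X : Type u} (w : X → ℤ), {x | w x ≤ N}.Finite →
      (∀ x, m ≤ w x) → ExactUpTo k w N from
    h 1 (by linarith) one_pos w hfin hw
  intro m hmN
  induction m, hmN using Int.leInductionDown with
  | base => exact fun _ _ w _ hw ↦ exactUpTo_of_lt hN hw
  | pred m hmN ih =>
    intro hm X w hfin hw
    exact exactUpTo_of_forall_lt hm (fun w hfin hw ↦ ih (by linarith) w hfin
      fun x ↦ Int.le_of_sub_one_lt (hw x)) (by linarith) w hfin hw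

end Exactness

section Degree

variable {k : Type*} [CommRing k] {V L : Type*} [AddCommGroup V] [Module k V] [LieRing L]
  [LieAlgebra k L]

theorem derivationExtension_mem_exteriorPower {n : ℕ} (f : Module.End k V) {z : ExteriorAlgebra k V}
    (hz : z ∈ ⋀[k]^n V) : derivationExtension f z ∈ ⋀[k]^n V := by
  suffices h : ⋀[k]^n V ≤ (⋀[k]^n V).comap (derivationExtension f) from h hz
  clear hz
  induction n with
  | zero => exact exteriorPower_zero_le (by simp)
  | succ n ih =>
    refine exteriorPower_succ_le fun a z hz ↦ ?_
    rw [Submodule.mem_comap, derivationExtension_ι_mul]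
    exact add_mem (ι_mul_mem_exteriorPower _ hz) (ι_mul_mem_exteriorPower _ (ih hz))

theorem differential_mem_exteriorPower {n : ℕ} {z : ExteriorAlgebra k L}
    (hz : z ∈ ⋀[k]^(n + 1) L) : differential k L z ∈ ⋀[k]^n L := by
  suffices h : ⋀[k]^(n + 1) L ≤ (⋀[k]^n L).comap (differential k L) from h hz
  clear hz
  refine exteriorPower_succ_le fun a z hz ↦ ?_
  rw [Submodule.mem_comap, differential_ι_mul]
  refine sub_mem (derivationExtension_mem_exteriorPower _ hz) ?_
  cases n with
  | zero =>
    have hdz : differential k L z = 0 :=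
      exteriorPower_zero_le (S := LinearMap.ker (differential k L)) (by simp) hz
    simp [hdz]
  | succ n => exact ι_mul_mem_exteriorPower a (differential_mem_exteriorPower hz)

variable (k L) in
/-- The Chevalley–Eilenberg differential `⋀ⁿ⁺¹ L → ⋀ⁿ L`. -/
noncomputable def exteriorPowerDifferential (n : ℕ) : ⋀[k]^(n + 1) L →ₗ[k] ⋀[k]^n L :=
  (differential k L).restrict fun _ ↦ differential_mem_exteriorPower

@[simp]
theorem coe_exteriorPowerDifferential {n : ℕ} (z : ⋀[k]^(n + 1) L) :
    (exteriorPowerDifferential k L n z : ExteriorAlgebra k L) = differential k L z := rfl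

end Degree

section Formula

variable {k : Type*} [CommRing k] {V L : Type*} [AddCommGroup V] [Module k V] [LieRing L]
  [LieAlgebra k L]

theorem derivationExtension_ιMulti (f : Module.End k V) (n : ℕ) (v : Fin (n + 1) → V) :
    derivationExtension f (ιMulti k (n + 1) v) =
      ∑ j : Fin (n + 1), (-1 : k) ^ j.val •
        (ι k (f (v j)) * ιMulti k n fun m ↦ v (j.succAbove m)) := by
  induction n with
  | zero => simp [ιMulti_succ_apply]
  | succ n ih =>
    rw [ιMulti_succ_apply, derivationExtension_ι_mul, ih, Fin.sum_univ_succ (n := n + 1),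
      Finset.mul_sum]
    congr 1
    · simp [Matrix.vecTail, Function.comp_def]
    · refine Finset.sum_congr rfl fun j _ ↦ ?_
      rw [ιMulti_succ_apply (n := n), mul_smul_comm, ι_mul_ι_mul (v 0)]
      simp [Matrix.vecTail, Function.comp_def, pow_succ]

theorem omit2_zero_succ {n : ℕ} (j : Fin (n + 1)) (h : (0 : Fin (n + 2)) < j.succ) (m : Fin n) :
    omit2 0 j.succ h m = (j.succAbove m).succ := by
  simp [omit2]

theorem castLT_succ {m n : ℕ} (i : Fin m) (h : i.succ.val < n + 1) :
    i.succ.castLT h = (i.castLT (Nat.succ_lt_succ_iff.mp h)).succ := rfl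

theorem omit2_succ_succ_zero {n : ℕ} (i j : Fin (n + 2)) (h : i.succ < j.succ) :
    omit2 i.succ j.succ h 0 = 0 := by
  simp [omit2, castLT_succ]

theorem omit2_succ_succ_succ {n : ℕ} (i j : Fin (n + 2)) (h : i.succ < j.succ) (m : Fin n) :
    omit2 i.succ j.succ h m.succ = (omit2 i j (Fin.succ_lt_succ_iff.mp h) m).succ := by
  simp [omit2, castLT_succ]

/-- The term `(-1)^(i+j+1) [lᵢ, lⱼ] ∧ l₀ ∧ … ∧ l̂ᵢ ∧ … ∧ l̂ⱼ ∧ …` of the Chevalley–Eilenberg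
formula, set to zero unless `i < j`. Indices start at zero, so the sign is that of the formula
indexed from one. -/
noncomputable def differentialTerm (k : Type*) [CommRing k] {L : Type*} [LieRing L]
    [LieAlgebra k L] {n : ℕ} (l : Fin (n + 2) → L) (i j : Fin (n + 2)) : ExteriorAlgebra k L :=
  if h : i < j then
    (-1 : k) ^ (i.val + j.val + 1) • (ι k ⁅l i, l j⁆ * ιMulti k n fun m ↦ l (omit2 i j h m))
  else 0

theorem sum_differentialTerm_zero {n : ℕ} (l : Fin (n + 2) → L) :
    ∑ j, differentialTerm k l 0 j =
      adExterior (l 0) (ιMulti k (n + 1) (Matrix.vecTail l)) := by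
  rw [adExterior, derivationExtension_ιMulti, Fin.sum_univ_succ]
  simp [differentialTerm, omit2_zero_succ, Matrix.vecTail, pow_succ]

theorem sum_differentialTerm_succ {n : ℕ} (l : Fin (n + 3) → L) (i : Fin (n + 2)) :
    ∑ j, differentialTerm k l i.succ j =
      -(ι k (l 0) * ∑ j, differentialTerm k (Matrix.vecTail l) i j) := by
  rw [Fin.sum_univ_succ, Finset.mul_sum, ← Finset.sum_neg_distrib, differentialTerm,
    dif_neg (by simp), zero_add]
  refine Finset.sum_congr rfl fun j _ ↦ ?_
  by_cases h : i < j
  · rw [differentialTerm, differentialTerm, dif_pos h, dif_pos (Fin.succ_lt_succ_iff.mpr h),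
      ιMulti_succ_apply, mul_smul_comm, ι_mul_ι_mul (l 0)]
    simp only [omit2_succ_succ_zero, omit2_succ_succ_succ, Matrix.vecTail, Function.comp_def,
      smul_neg, neg_neg, Fin.val_succ]
    congr 1
    ring
  · simp [differentialTerm, h]

theorem differential_ιMulti (n : ℕ) (l : Fin (n + 2) → L) :
    differential k L (ιMulti k (n + 2) l) = ∑ i, ∑ j, differentialTerm k l i j := by
  induction n with
  | zero =>
    simp [ιMulti_succ_apply, differential_ι_mul, differentialTerm, Fin.sum_univ_succ,
      Matrix.vecTail]
  | succ n ih =>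
    rw [ιMulti_succ_apply, differential_ι_mul, ih,
      Fin.sum_univ_succ fun i ↦ ∑ j, differentialTerm k l i j, sum_differentialTerm_zero]
    simp only [sum_differentialTerm_succ, Finset.sum_neg_distrib, Finset.mul_sum, sub_eq_add_neg]

end Formula

theorem eq_exteriorPowerDifferential_of_isCEDiff {k : Type*} [Field k] {L : Type*} [LieRing L]
    [LieAlgebra k L] {D : (n : ℕ) → ⋀[k]^(n + 1) L →ₗ[k] ⋀[k]^n L} (hD : IsCEDiff k L D) :
    D = exteriorPowerDifferential k L := by
  funext n
  refine exteriorPower.linearMap_ext (AlternatingMap.ext fun l ↦ Subtype.ext ?_)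
  change ((D n (wedge k (n + 1) l) : ⋀[k]^n L) : ExteriorAlgebra k L) =
    differential k L (ιMulti k (n + 1) l)
  cases n with
  | zero => simp [hD.1, ιMulti_succ_apply]
  | succ n =>
    rw [hD.2, differential_ιMulti]
    simp only [Submodule.coe_sum]
    refine Finset.sum_congr rfl fun i _ ↦ Finset.sum_congr rfl fun j _ ↦ ?_
    unfold differentialTerm
    split_ifs with h
    · simp [wedge, ιMulti_succ_apply, Matrix.vecTail, Function.comp_def]
    · rfl

section Exhaustion

open Filter

variable {k : Type*} [CommRing k] {X : Type*} {n : ℕ}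

/-- An element of the free Lie algebra involves only finitely many letters, so it has a weight bound
which does not depend on the weights of the other letters. -/
theorem exists_eventually_mem_weightFiltration (a : FreeLieAlgebra k X) :
    ∃ N, ∀ᶠ S : Finset X in atTop, ∀ w : X → ℤ, (∀ x ∈ S, w x = 1) →
      a ∈ weightFiltration k w N := by
  have hw (w : X → ℤ) := isWeightFiltration_weightFiltration k w
  induction a using freeLieAlgebra_induction with
  | of x =>
    refine ⟨1, (eventually_ge_atTop {x}).mono fun S hS w hS1 ↦ ?_⟩
    exact hS1 x (hS (Finset.mem_singleton_self x)) ▸ (hw w).of_mem x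
  | zero => exact ⟨0, .of_forall fun _ _ _ ↦ zero_mem _⟩
  | add a b ha hb =>
    obtain ⟨⟨N, ha⟩, ⟨N', hb⟩⟩ := And.intro ha hb
    refine ⟨max N N', (ha.and hb).mono fun S ⟨ha, hb⟩ w hS ↦ add_mem ?_ ?_⟩
    · exact (hw w).mono (le_max_left N N') (ha w hS)
    · exact (hw w).mono (le_max_right N N') (hb w hS)
  | smul r a ha =>
    obtain ⟨N, ha⟩ := ha
    exact ⟨N, ha.mono fun S ha w hS ↦ Submodule.smul_mem _ r (ha w hS)⟩
  | lie a b ha hb =>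
    obtain ⟨⟨N, ha⟩, ⟨N', hb⟩⟩ := And.intro ha hb
    exact ⟨N + N', (ha.and hb).mono fun S ⟨ha, hb⟩ w hS ↦ (hw w).lie_mem (ha w hS) (hb w hS)⟩

theorem exists_eventually_mem_chainFiltration {z : ExteriorAlgebra k (FreeLieAlgebra k X)}
    (hz : z ∈ ⋀[k]^n (FreeLieAlgebra k X)) :
    ∃ N, ∀ᶠ S : Finset X in atTop, ∀ w : X → ℤ, (∀ x ∈ S, w x = 1) →
      z ∈ chainFiltration k w n N := by
  induction hz using Submodule.pow_induction_on_left' with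
  | algebraMap r =>
    refine ⟨0, .of_forall fun S w _ ↦ ?_⟩
    rw [Algebra.algebraMap_eq_smul_one]
    exact Submodule.smul_mem _ r (one_mem_wedgeFiltration le_rfl)
  | add y z n _ _ hy hz =>
    obtain ⟨⟨N, hy⟩, ⟨N', hz⟩⟩ := And.intro hy hz
    refine ⟨max N N', (hy.and hz).mono fun S ⟨hy, hz⟩ w hS ↦ add_mem ?_ ?_⟩
    · exact wedgeFiltration_mono _ n (le_max_left N N') (hy w hS)
    · exact wedgeFiltration_mono _ n (le_max_right N N') (hz w hS)
  | mem_mul v hv n z _ hz =>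
    obtain ⟨a, rfl⟩ := hv
    obtain ⟨N, ha⟩ := exists_eventually_mem_weightFiltration a
    obtain ⟨N', hz⟩ := hz
    refine ⟨N + N', (ha.and hz).mono fun S ⟨ha, hz⟩ w hS ↦ ι_mul_mem_wedgeFiltration (ha w hS) ?_⟩
    rw [add_sub_cancel_left]
    exact hz w hS

theorem exists_differential_eq {z : ExteriorAlgebra k (FreeLieAlgebra k X)}
    (hz : z ∈ ⋀[k]^(n + 2) (FreeLieAlgebra k X)) (hdz : differential k _ z = 0) :
    ∃ u ∈ ⋀[k]^(n + 3) (FreeLieAlgebra k X), differential k _ u = z := by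
  classical
  obtain ⟨N, hN⟩ := exists_eventually_mem_chainFiltration hz
  obtain ⟨S, hS⟩ := hN.exists
  let w (x : X) : ℤ := if x ∈ S then 1 else |N| + 1
  have hw (x : X) : 0 < w x := by
    dsimp only [w]
    split_ifs <;> positivity
  have hfin : {x | w x ≤ |N|}.Finite := S.finite_toSet.subset fun x hx ↦ by
    by_contra hxS
    simp_all [w]
  obtain ⟨u, hu, hdu⟩ := exactUpTo_of_finite (abs_nonneg N) hfin hw n N (le_abs_self N) z
    (hS w fun x hx ↦ if_pos hx) hdz
  exact ⟨u, wedgeFiltration_le_exteriorPower _ _ _ hu, hdu⟩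

end Exhaustion

section Homology

variable (k : Type*) [CommRing k] (X : Type*)

theorem ker_exteriorPowerDifferential_succ (n : ℕ) :
    LinearMap.ker (exteriorPowerDifferential k (FreeLieAlgebra k X) (n + 1)) =
      LinearMap.range (exteriorPowerDifferential k (FreeLieAlgebra k X) (n + 2)) := by
  refine le_antisymm (fun z hz ↦ ?_) ?_
  · obtain ⟨u, hu, hdu⟩ := exists_differential_eq z.2 (congrArg Subtype.val hz)
    exact ⟨⟨u, hu⟩, Subtype.ext hdu⟩
  · rintro _ ⟨u, rfl⟩
    exact Subtype.ext (differential_differential _)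

/-- The map from the free module on `X` to the first Chevalley–Eilenberg homology of the free Lie
algebra which sends a letter to its class. -/
noncomputable def generatorClass :
    (X →₀ k) →ₗ[k] ⋀[k]^1 (FreeLieAlgebra k X) ⧸
      LinearMap.range (exteriorPowerDifferential k (FreeLieAlgebra k X) 1) :=
  (Submodule.mkQ _ ∘ₗ (exteriorPower.oneEquiv k _).symm.toLinearMap) ∘ₗ
    Finsupp.linearCombination k (of k)

theorem generatorClass_single (x : X) :
    generatorClass k X (Finsupp.single x 1) =
      Submodule.Quotient.mk (exteriorPower.ιMulti k 1 fun _ ↦ of k x) := by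
  simp [generatorClass, exteriorPower.oneEquiv_symm_apply]

theorem coe_oneEquiv_symm (V : Type*) [AddCommGroup V] [Module k V] (v : V) :
    ((exteriorPower.oneEquiv k V).symm v : ExteriorAlgebra k V) = ι k v := by
  simp [exteriorPower.oneEquiv_symm_apply, ιMulti_succ_apply]

theorem generatorClass_injective : Function.Injective (generatorClass k X) := by
  refine (injective_iff_map_eq_zero _).mpr fun g hg ↦ ?_
  obtain ⟨u, hu⟩ := (Submodule.Quotient.mk_eq_zero _).mp hg
  have hu : differential k _ u = ι k (Finsupp.linearCombination k (of k) g) := by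
    rw [← coe_exteriorPowerDifferential, hu]
    exact coe_oneEquiv_symm k _ _
  have hι := congrArg (map (generatorCoords k X).toLinearMap) hu
  rw [map_differential_eq_zero generatorCoords_lie, map_apply_ι, LieHom.coe_toLinearMap,
    generatorCoords_linearCombination] at hι
  exact DFunLike.coe_injective ((ι_eq_zero_iff _).mp hι.symm)

theorem generatorClass_surjective : Function.Surjective (generatorClass k X) := by
  intro q
  obtain ⟨z, rfl⟩ := Submodule.mkQ_surjective _ q
  obtain ⟨v, rfl⟩ := (exteriorPower.oneEquiv k _).symm.surjective z
  obtain ⟨N, hN⟩ := exists_eventually_mem_weightFiltration v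
  obtain ⟨S, hS⟩ := hN.exists
  obtain ⟨g, u, hu, hv⟩ :=
    exists_ι_eq_ι_linearCombination_add_differential (hS (fun _ ↦ 1) fun _ _ ↦ rfl)
  have hu := wedgeFiltration_le_exteriorPower _ _ _ hu
  refine ⟨g, ((Submodule.Quotient.eq _).mpr ?_).symm⟩
  refine ⟨⟨u, hu⟩, Subtype.ext ?_⟩
  simp [coe_oneEquiv_symm, hv]

end Homology

end ChevalleyEilenberg

open ChevalleyEilenberg in
theorem chevalleyEilenberg_homology_freeLieAlgebra_general (k : Type*) [CommRing k] (X : Type*) :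
    (∀ n : ℕ, 1 ≤ n → LinearMap.ker (exteriorPowerDifferential k (FreeLieAlgebra k X) n) =
      LinearMap.range (exteriorPowerDifferential k (FreeLieAlgebra k X) (n + 1))) ∧
    ∃ e : (X →₀ k) ≃ₗ[k] ⋀[k]^1 (FreeLieAlgebra k X) ⧸
        LinearMap.range (exteriorPowerDifferential k (FreeLieAlgebra k X) 1),
      ∀ x : X, e (Finsupp.single x 1) =
        Submodule.Quotient.mk (exteriorPower.ιMulti k 1 fun _ ↦ FreeLieAlgebra.of k x) := by
  refine ⟨fun n hn ↦ ?_, .ofBijective (generatorClass k X)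
    ⟨generatorClass_injective k X, generatorClass_surjective k X⟩, generatorClass_single k X⟩
  obtain ⟨n, rfl⟩ := Nat.exists_eq_add_of_le' hn
  exact ker_exteriorPowerDifferential_succ k X n

/-- The Chevalley–Eilenberg homology of the free Lie algebra on `X`, with trivial
coefficients, vanishes in degrees `≥ 2` (`ker d_n = range d_{n+1}` for `n ≥ 2`, i.e.
`ker (D n) = range (D (n+1))` for `n ≥ 1`), and in degree 1 it is the free `k`-vector
space on `X`, via `x ↦ class of (of x)`. -/
theorem chevalleyEilenberg_homology_freeLieAlgebra
    (k : Type*) [Field k] [CharZero k] (X : Type*)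
    (D : (n : ℕ) → (⋀[k]^(n+1) (FreeLieAlgebra k X) →ₗ[k] ⋀[k]^n (FreeLieAlgebra k X)))
    (hD : IsCEDiff k (FreeLieAlgebra k X) D) :
    (∀ n : ℕ, 1 ≤ n → LinearMap.ker (D n) = LinearMap.range (D (n + 1))) ∧
    (∃ e : (X →₀ k) ≃ₗ[k]
        (⋀[k]^1 (FreeLieAlgebra k X) ⧸ LinearMap.range (D 1)),
      ∀ x : X,
        e (Finsupp.single x 1) =
          Submodule.Quotient.mk (wedge k 1 (fun _ => FreeLieAlgebra.of k x))) := by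
  obtain rfl := ChevalleyEilenberg.eq_exteriorPowerDifferential_of_isCEDiff hD
  exact chevalleyEilenberg_homology_freeLieAlgebra_general k X
end

section
/- Let k be a field of characteristic 0, X a type, and W a k-vector space. Let C₀ be the non-unital subalgebra of the polynomial algebra MvPolynomial X k generated by the variables (the polynomials with zero constant term), let T̄(W) be the non-unital subalgebra of TensorAlgebra k W generated by the canonical image ι(W), and let A₀ := (MvPolynomial X k) ⊗ T̄(W) with the componentwise multiplication (u ⊗ v)·(u' ⊗ v') = (u·u') ⊗ (v·v'), and define ρ₀ : C₀ ⊗ A₀ → A₀ by ρ₀(c, u ⊗ v) = (c·u) ⊗ v. Then: (1) C₀ is a commutative non-unital k-algebra, A₀ is an associative non-unital k-algebra, and ρ₀ satisfies ρ₀(c·c', a) = ρ₀(c, ρ₀(c', a)) = ρ₀(c', ρ₀(c, a)) and ρ₀(c, a·a') = ρ₀(c, a)·a' = a·ρ₀(c, a'); (2) the triple (C₀, A₀, ρ₀) is the free such structure generated by (X, W): for every triple (C, A, ρ) where C is a commutative non-unital k-algebra, A an associative non-unital k-algebra, and ρ : C ⊗ A → A a k-linear map satisfying ρ(cc', a) =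 ρ(c, ρ(c', a)) = ρ(c', ρ(c, a)) and ρ(c, aa') = ρ(c, a)a' = aρ(c, a'), and for every map φ : X → C and k-linear map ψ : W → A, there exist a unique non-unital k-algebra homomorphism F : C₀ → C with F(x) = φ(x) on each variable x ∈ X, and a unique non-unital k-algebra homomorphism G : A₀ → A with G(1 ⊗ ι(w)) = ψ(w) for all w ∈ W and G(ρ₀(c, a)) = ρ(F(c), G(a)) for all c ∈ C₀, a ∈ A₀. -/
/-!
STATEMENT 7: the free `H₀(SC^vor)`-algebra generated by `(X, W)`: closed part the free
non-unital commutative algebra `S(V_c)` (polynomials with zero constant term), open part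
`S⁺(V_c) ⊗ T(V_o) = (MvPolynomial X k) ⊗ T̄(W)` with componentwise multiplication, and
structure map `ρ₀(c, u ⊗ v) = (c·u) ⊗ v`.
-/

open scoped TensorProduct

set_option synthInstance.maxHeartbeats 1000000
set_option maxHeartbeats 1000000

/-- The free non-unital commutative algebra on `X`: the non-unital subalgebra of
`MvPolynomial X k` generated by the variables (= polynomials with zero constant term). -/
noncomputable def freeNonUnitalComm (k : Type*) [Field k] (X : Type*) :
    NonUnitalSubalgebra k (MvPolynomial X k) :=
  NonUnitalAlgebra.adjoin k (Set.range (MvPolynomial.X : X → MvPolynomial X k))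

/-- The variable `x`, as an element of the free non-unital commutative algebra. -/
noncomputable def varC (k : Type*) [Field k] {X : Type*} (x : X) : freeNonUnitalComm k X :=
  ⟨MvPolynomial.X x, NonUnitalAlgebra.subset_adjoin k (Set.mem_range_self x)⟩

/-- The free non-unital associative algebra `T(W) = ⊕_{n≥1} W^{⊗n}`: the non-unital
subalgebra of the tensor algebra on `W` generated by the canonical image of `W`. -/
noncomputable def freeNonUnitalAssoc (k : Type*) [Field k]
    (W : Type*) [AddCommGroup W] [Module k W] : NonUnitalSubalgebra k (TensorAlgebra k W) :=
  NonUnitalAlgebra.adjoin k (Set.range (TensorAlgebra.ι k))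

/-- The canonical map `W → T(W)`. -/
noncomputable def iotaW (k : Type*) [Field k] {W : Type*} [AddCommGroup W] [Module k W]
    (w : W) : freeNonUnitalAssoc k W :=
  ⟨TensorAlgebra.ι k w, NonUnitalAlgebra.subset_adjoin k (Set.mem_range_self w)⟩

/-- The open part of the free `H₀(SC^vor)`-algebra on `(X, W)`:
`S⁺(V_c) ⊗ T(V_o) = (MvPolynomial X k) ⊗ T̄(W)`, with componentwise multiplication. -/
noncomputable abbrev freeSCVorOpen (k : Type*) [Field k] (X : Type*)
    (W : Type*) [AddCommGroup W] [Module k W] :=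
  MvPolynomial X k ⊗[k] (freeNonUnitalAssoc k W)

/-- The defining formula of the structure map of the free `H₀(SC^vor)`-algebra:
`ρ₀(c ⊗ (u ⊗ v)) = (c·u) ⊗ v`. -/
def IsFreeSCVorAction (k : Type*) [Field k] (X : Type*)
    (W : Type*) [AddCommGroup W] [Module k W]
    (ρ₀ : (freeNonUnitalComm k X) ⊗[k] (freeSCVorOpen k X W) →ₗ[k] freeSCVorOpen k X W) :
    Prop :=
  ∀ (c : freeNonUnitalComm k X) (u : MvPolynomial X k) (v : freeNonUnitalAssoc k W),
    ρ₀ (c ⊗ₜ[k] (u ⊗ₜ[k] v)) = ((c : MvPolynomial X k) * u) ⊗ₜ[k] v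

/-!
An `H₀(SC^vor)`-algebra `(C, A, ρ)` is the same as a non-unital algebra `A` over the unitization
`C⁺` of `C`: the identities for `ρ` say that `c ↦ ρ(c, -)` is multiplicative and takes values in
the centroid of `A`. A map `X → C` extends to `S⁺(V_c) → C⁺`, so it makes `A` a non-unital
`S⁺(V_c)`-algebra. Since `S⁺(V_c) ⊗ T(V_o)` is the base change of `T(V_o)`, its homomorphisms of
`S⁺(V_c)`-algebras into `A` are the linear maps `V_o → A`. Finally, `S(V_c)` generates `S⁺(V_c)`, so
compatibility with the structure maps is the same as `S⁺(V_c)`-linearity.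
-/

section Adjoin

variable {R B C : Type*} [CommSemiring R]

theorem nonUnitalAlgHom_adjoin_ext [NonUnitalSemiring B] [Module R B] [SMulCommClass R B B]
    [IsScalarTower R B B] [NonUnitalNonAssocSemiring C] [Module R C] {s : Set B}
    {F G : NonUnitalAlgebra.adjoin R s →ₙₐ[R] C}
    (h : ∀ b (hb : b ∈ s), F ⟨b, NonUnitalAlgebra.subset_adjoin R hb⟩ =
      G ⟨b, NonUnitalAlgebra.subset_adjoin R hb⟩) : F = G := by
  have adjoin_le_equalizer : NonUnitalAlgebra.adjoin R s ≤
      (NonUnitalAlgHom.equalizer F G).map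
        (NonUnitalSubalgebraClass.subtype (NonUnitalAlgebra.adjoin R s)) :=
    NonUnitalAlgebra.adjoin_le fun b hb => ⟨_, h b hb, rfl⟩
  ext ⟨b, hb⟩
  obtain ⟨b, hFG, rfl⟩ := adjoin_le_equalizer hb
  exact hFG

theorem exists_nonUnitalAlgHom_adjoin_inr_eq [Semiring B] [Algebra R B] [NonUnitalSemiring C]
    [Module R C] [SMulCommClass R C C] [IsScalarTower R C C] {s : Set B}
    (f : B →ₐ[R] Unitization R C) (hf : ∀ b ∈ s, ∃ c : C, (c : Unitization R C) = f b) :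
    ∃ F : NonUnitalAlgebra.adjoin R s →ₙₐ[R] C, ∀ b, (F b : Unitization R C) = f b := by
  have adjoin_le_comap_range : NonUnitalAlgebra.adjoin R s ≤
      (NonUnitalAlgHom.range (Unitization.inrNonUnitalAlgHom R C)).comap f :=
    NonUnitalAlgebra.adjoin_le hf
  choose F hF using fun b : NonUnitalAlgebra.adjoin R s => adjoin_le_comap_range b.2
  replace hF : ∀ b, (F b : Unitization R C) = f b := hF
  refine ⟨{ toFun := F, map_smul' := fun r b => ?_, map_zero' := ?_, map_add' := fun b b' => ?_,
            map_mul' := fun b b' => ?_ }, hF⟩ <;>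
    exact Unitization.inr_injective (R := R) (by simp [hF])

end Adjoin

section Generators

variable (R : Type*) [CommSemiring R]

/-- The free non-unital commutative algebra `S(V_c)` on `X`, over any commutative semiring of
coefficients; over a field it is `freeNonUnitalComm`. -/
noncomputable abbrev positivePolynomials (X : Type*) : NonUnitalSubalgebra R (MvPolynomial X R) :=
  NonUnitalAlgebra.adjoin R (Set.range MvPolynomial.X)

/-- The free non-unital associative algebra `T(W)`, over any commutative semiring of coefficients;
over a field it is `freeNonUnitalAssoc`. -/
noncomputable abbrev positiveTensors (W : Type*) [AddCommMonoid W] [Module R W] :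
    NonUnitalSubalgebra R (TensorAlgebra R W) :=
  NonUnitalAlgebra.adjoin R (Set.range (TensorAlgebra.ι R))

variable {X W : Type*} [AddCommMonoid W] [Module R W]

/-- The variable `x`, as an element of `S(V_c)`. -/
noncomputable def positivePolynomials.var (x : X) : positivePolynomials R X :=
  ⟨MvPolynomial.X x, NonUnitalAlgebra.subset_adjoin R ⟨x, rfl⟩⟩

/-- The canonical map `W → T(W)`. -/
noncomputable def positiveTensors.ι (w : W) : positiveTensors R W :=
  ⟨TensorAlgebra.ι R w, NonUnitalAlgebra.subset_adjoin R ⟨w, rfl⟩⟩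

variable {R}

theorem positivePolynomials.hom_ext {C : Type*} [NonUnitalNonAssocSemiring C] [Module R C]
    {F F' : positivePolynomials R X →ₙₐ[R] C}
    (h : ∀ x, F (positivePolynomials.var R x) = F' (positivePolynomials.var R x)) : F = F' :=
  nonUnitalAlgHom_adjoin_ext <| by rintro _ ⟨x, rfl⟩; exact h x

theorem positiveTensors.hom_ext {A : Type*} [NonUnitalNonAssocSemiring A] [Module R A]
    {θ θ' : positiveTensors R W →ₙₐ[R] A}
    (h : ∀ w, θ (positiveTensors.ι R w) = θ' (positiveTensors.ι R w)) : θ = θ' :=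
  nonUnitalAlgHom_adjoin_ext <| by rintro _ ⟨w, rfl⟩; exact h w

theorem positivePolynomials.existsUnique_hom {C : Type*} [NonUnitalCommSemiring C] [Module R C]
    [SMulCommClass R C C] [IsScalarTower R C C] (φ : X → C) :
    ∃! F : positivePolynomials R X →ₙₐ[R] C, ∀ x, F (positivePolynomials.var R x) = φ x := by
  obtain ⟨F, hF⟩ := exists_nonUnitalAlgHom_adjoin_inr_eq (s := Set.range MvPolynomial.X)
    (MvPolynomial.aeval fun x => (φ x : Unitization R C))
    (by rintro _ ⟨x, rfl⟩; exact ⟨φ x, by simp⟩)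
  have hFX (x : X) : F (positivePolynomials.var R x) = φ x :=
    Unitization.inr_injective (R := R) ((hF _).trans (MvPolynomial.aeval_X _ x))
  exact ⟨F, hFX, fun F' hF' => hom_ext fun x => (hF' x).trans (hFX x).symm⟩

theorem positiveTensors.existsUnique_hom {A : Type*} [NonUnitalSemiring A] [Module R A]
    [SMulCommClass R A A] [IsScalarTower R A A] (ψ : W →ₗ[R] A) :
    ∃! θ : positiveTensors R W →ₙₐ[R] A, ∀ w, θ (positiveTensors.ι R w) = ψ w := by
  obtain ⟨θ, hθ⟩ := exists_nonUnitalAlgHom_adjoin_inr_eq (s := Set.range (TensorAlgebra.ι R))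
    (TensorAlgebra.lift R (Unitization.inrHom R R A ∘ₗ ψ))
    (by rintro _ ⟨w, rfl⟩; exact ⟨ψ w, by simp⟩)
  have hθι (w : W) : θ (positiveTensors.ι R w) = ψ w :=
    Unitization.inr_injective (R := R) ((hθ _).trans (TensorAlgebra.lift_ι_apply _ w))
  exact ⟨θ, hθι, fun θ' hθ' => hom_ext fun w => (hθ' w).trans (hθι w).symm⟩

theorem positivePolynomials.aeval_inr_eq {C : Type*} [NonUnitalCommSemiring C] [Module R C]
    [SMulCommClass R C C] [IsScalarTower R C C] (F : positivePolynomials R X →ₙₐ[R] C)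
    (c : positivePolynomials R X) :
    MvPolynomial.aeval (fun x => (F (positivePolynomials.var R x) : Unitization R C))
      (c : MvPolynomial X R) = F c := by
  have restrict_eq :
      ((MvPolynomial.aeval fun x => (F (positivePolynomials.var R x) : Unitization R C) :
          MvPolynomial X R →ₐ[R] Unitization R C) : MvPolynomial X R →ₙₐ[R] Unitization R C).comp
        (NonUnitalSubalgebraClass.subtype (positivePolynomials R X)) =
      (Unitization.inrNonUnitalAlgHom R C).comp F :=
    hom_ext fun x => MvPolynomial.aeval_X _ x
  exact NonUnitalAlgHom.congr_fun restrict_eq c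

theorem positivePolynomials.algebra_adjoin_eq_top :
    Algebra.adjoin R (positivePolynomials R X : Set (MvPolynomial X R)) = ⊤ :=
  top_unique <| MvPolynomial.adjoin_range_X.ge.trans <|
    Algebra.adjoin_mono (NonUnitalAlgebra.subset_adjoin R)

end Generators

theorem map_smul_of_algebra_adjoin_eq_top {R P M N : Type*} [CommSemiring R] [Semiring P]
    [Algebra R P] [AddCommMonoid M] [AddCommMonoid N] [Module R M] [Module R N] [Module P M]
    [Module P N] [IsScalarTower R P M] [IsScalarTower R P N] {s : Set P}
    (hs : Algebra.adjoin R s = ⊤) (g : M →ₗ[R] N) (hg : ∀ u ∈ s, ∀ m, g (u • m) = u • g m)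
    (u : P) (m : M) : g (u • m) = u • g m := by
  have hu : u ∈ Algebra.adjoin R s := hs ▸ Algebra.mem_top
  induction hu using Algebra.adjoin_induction generalizing m with
  | mem u hu => exact hg u hu m
  | algebraMap r => simp only [algebraMap_smul, map_smul]
  | add u v _ _ hu hv => simp only [add_smul, map_add, hu, hv]
  | mul u v _ _ hu hv => simp only [mul_smul, hu, hv]

section BaseChange

variable {R P T A : Type*} [CommSemiring R] [CommSemiring P] [Algebra R P]
  [NonUnitalNonAssocSemiring T] [Module R T] [SMulCommClass R T T] [IsScalarTower R T T]
  [NonUnitalNonAssocSemiring A] [Module R A] [Module P A] [IsScalarTower R P A]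
  [IsScalarTower P A A] [SMulCommClass P A A]

/-- The extension of scalars of a homomorphism `θ : T → A` of non-unital algebras, for `A` a
non-unital algebra over the larger ring `P`; on pure tensors, `u ⊗ t ↦ u • θ t`. -/
noncomputable def nonUnitalBaseChangeLift (θ : T →ₙₐ[R] A) : P ⊗[R] T →ₙₐ[P] A :=
  { (θ : T →ₗ[R] A).liftBaseChange P with
    map_zero' := map_zero _
    map_mul' := fun a b => by
      change (θ : T →ₗ[R] A).liftBaseChange P (a * b) =
        (θ : T →ₗ[R] A).liftBaseChange P a * (θ : T →ₗ[R] A).liftBaseChange P b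
      induction a with
      | zero => simp only [zero_mul, map_zero]
      | add a a' ha ha' => simp only [add_mul, map_add, ha, ha']
      | tmul u t =>
        induction b with
        | zero => simp only [mul_zero, map_zero]
        | add b b' hb hb' => simp only [mul_add, map_add, hb, hb']
        | tmul u' t' =>
          simp only [Algebra.TensorProduct.tmul_mul_tmul, LinearMap.liftBaseChange_tmul,
            LinearMap.coe_coe, map_mul, smul_mul_smul_comm] }

theorem nonUnitalBaseChangeLift_tmul (θ : T →ₙₐ[R] A) (u : P) (t : T) :
    nonUnitalBaseChangeLift θ (u ⊗ₜ[R] t) = u • θ t :=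
  rfl

variable (R P T) in
/-- The homomorphism `t ↦ 1 ⊗ t` of non-unital algebras, the non-unital counterpart of
`Algebra.TensorProduct.includeRight`. -/
noncomputable def nonUnitalIncludeRight : T →ₙₐ[R] P ⊗[R] T :=
  { TensorProduct.mk R P T 1 with
    map_zero' := map_zero (TensorProduct.mk R P T 1)
    map_mul' := fun t t' => by simp }

theorem existsUnique_hom_baseChange {s : Set P} (hs : Algebra.adjoin R s = ⊤) (θ : T →ₙₐ[R] A) :
    ∃! G : P ⊗[R] T →ₙₐ[R] A,
      G.comp (nonUnitalIncludeRight R P T) = θ ∧ ∀ u ∈ s, ∀ a, G (u • a) = u • G a := by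
  refine ⟨(nonUnitalBaseChangeLift θ).restrictScalars R,
    ⟨NonUnitalAlgHom.ext fun t => (nonUnitalBaseChangeLift_tmul θ 1 t).trans (one_smul P _),
      fun u _ => map_smul (nonUnitalBaseChangeLift θ) u⟩, ?_⟩
  rintro G ⟨rfl, hGs⟩
  have hGP : ∀ (u : P) a, G (u • a) = u • G a :=
    map_smul_of_algebra_adjoin_eq_top hs (G : P ⊗[R] T →ₗ[R] A) hGs
  ext a
  induction a with
  | zero => simp only [map_zero]
  | add a a' ha ha' => simp only [map_add, ha, ha']
  | tmul u t =>
    calc G (u ⊗ₜ t) = G (u • (1 ⊗ₜ t)) := by rw [TensorProduct.smul_tmul', smul_eq_mul, mul_one]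
      _ = u • G (1 ⊗ₜ t) := hGP u _

theorem existsUnique_hom_tensor_positiveTensors {W A : Type*} [AddCommMonoid W] [Module R W]
    [NonUnitalSemiring A] [Module R A] [Module P A] [IsScalarTower R P A] [IsScalarTower P A A]
    [SMulCommClass P A A] {s : Set P}
    (hs : Algebra.adjoin R s = ⊤) (ψ : W →ₗ[R] A) :
    ∃! G : P ⊗[R] positiveTensors R W →ₙₐ[R] A,
      (∀ w, G (1 ⊗ₜ positiveTensors.ι R w) = ψ w) ∧ ∀ u ∈ s, ∀ a, G (u • a) = u • G a := by
  have : IsScalarTower R A A := .to₁₃₄ R P A A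
  have : SMulCommClass R A A :=
    ⟨fun r a a' => by simp only [← algebraMap_smul P r, smul_eq_mul, mul_smul_comm]⟩
  obtain ⟨θ, hθ, θ_unique⟩ := positiveTensors.existsUnique_hom ψ
  have comp_eq_iff (G : P ⊗[R] positiveTensors R W →ₙₐ[R] A) :
      G.comp (nonUnitalIncludeRight R P _) = θ ↔ ∀ w, G (1 ⊗ₜ positiveTensors.ι R w) = ψ w :=
    ⟨fun hG w => (NonUnitalAlgHom.congr_fun hG _).trans (hθ w),
      θ_unique (G.comp (nonUnitalIncludeRight R P _))⟩
  simpa only [comp_eq_iff] using existsUnique_hom_baseChange hs θ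

end BaseChange

/-- `IsSCVorAlgebra ρ` says that `ρ : C ⊗ A → A` is the structure map of an `H₀(SC^vor)`-algebra
with closed part `C` and open part `A`. -/
structure IsSCVorAlgebra {R C A : Type*} [CommSemiring R] [NonUnitalNonAssocSemiring C] [Module R C]
    [NonUnitalNonAssocSemiring A] [Module R A] (ρ : C ⊗[R] A →ₗ[R] A) : Prop where
  mul_act : ∀ (c c' : C) (a : A),
    ρ ((c * c') ⊗ₜ[R] a) = ρ (c ⊗ₜ[R] ρ (c' ⊗ₜ[R] a)) ∧
    ρ ((c * c') ⊗ₜ[R] a) = ρ (c' ⊗ₜ[R] ρ (c ⊗ₜ[R] a))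
  act_mul : ∀ (c : C) (a a' : A),
    ρ (c ⊗ₜ[R] (a * a')) = ρ (c ⊗ₜ[R] a) * a' ∧
    ρ (c ⊗ₜ[R] (a * a')) = a * ρ (c ⊗ₜ[R] a')

namespace IsSCVorAlgebra

variable {R : Type*} [CommSemiring R]

theorem of_apply_tmul_eq_smul {P A : Type*} [CommSemiring P] [Algebra R P]
    [NonUnitalNonAssocSemiring A] [Module R A] [Module P A] [IsScalarTower P A A]
    [SMulCommClass P A A] {S : NonUnitalSubalgebra R P} {ρ : S ⊗[R] A →ₗ[R] A}
    (hρ : ∀ (c : S) (a : A), ρ (c ⊗ₜ[R] a) = (c : P) • a) : IsSCVorAlgebra ρ where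
  mul_act c c' a := by
    simp only [hρ, NonUnitalSubalgebra.coe_mul]
    exact ⟨mul_smul _ _ _, by rw [mul_comm, mul_smul]⟩
  act_mul c a a' := by
    simp only [hρ]
    exact ⟨(smul_mul_assoc _ _ _).symm, (mul_smul_comm _ _ _).symm⟩

section UnitizationAction

variable {C A : Type*} [NonUnitalSemiring C] [Module R C] [SMulCommClass R C C]
  [IsScalarTower R C C] [NonUnitalNonAssocSemiring A] [Module R A] {ρ : C ⊗[R] A →ₗ[R] A}

/-- The unital action on `A` of the unitization `C⁺` of `C`, in which `c ∈ C` acts by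
`ρ (c ⊗ -)`. -/
noncomputable def unitizationAction (h : IsSCVorAlgebra ρ) :
    Unitization R C →ₐ[R] Module.End R A :=
  Unitization.lift
    { TensorProduct.curry ρ with
      map_zero' := map_zero (TensorProduct.curry ρ)
      map_mul' := fun c c' => LinearMap.ext fun a => (h.mul_act c c' a).1 }

theorem unitizationAction_apply (h : IsSCVorAlgebra ρ) (z : Unitization R C) (a : A) :
    h.unitizationAction z a = z.fst • a + ρ (z.snd ⊗ₜ[R] a) := by
  simp [unitizationAction]

theorem unitizationAction_inr (h : IsSCVorAlgebra ρ) (c : C) (a : A) :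
    h.unitizationAction c a = ρ (c ⊗ₜ[R] a) := by
  simp [unitizationAction_apply]

theorem unitizationAction_mul_left [IsScalarTower R A A] (h : IsSCVorAlgebra ρ)
    (z : Unitization R C) (a a' : A) :
    h.unitizationAction z (a * a') = h.unitizationAction z a * a' := by
  simp only [unitizationAction_apply, (h.act_mul _ a a').1, add_mul, smul_mul_assoc]

theorem unitizationAction_mul_right [SMulCommClass R A A] (h : IsSCVorAlgebra ρ)
    (z : Unitization R C) (a a' : A) :
    h.unitizationAction z (a * a') = a * h.unitizationAction z a' := by
  simp only [unitizationAction_apply, (h.act_mul _ a a').2, mul_add, mul_smul_comm]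

end UnitizationAction

theorem existsUnique_hom_open {X W C A : Type*} [AddCommMonoid W] [Module R W]
    [NonUnitalCommSemiring C] [Module R C] [SMulCommClass R C C] [IsScalarTower R C C]
    [NonUnitalSemiring A] [Module R A] [SMulCommClass R A A] [IsScalarTower R A A]
    {ρ : C ⊗[R] A →ₗ[R] A} (h : IsSCVorAlgebra ρ) (F : positivePolynomials R X →ₙₐ[R] C)
    (ψ : W →ₗ[R] A) :
    ∃! G : MvPolynomial X R ⊗[R] positiveTensors R W →ₙₐ[R] A,
      (∀ w, G (1 ⊗ₜ positiveTensors.ι R w) = ψ w) ∧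
      ∀ (c : positivePolynomials R X) a, G ((c : MvPolynomial X R) • a) = ρ (F c ⊗ₜ[R] G a) := by
  let α : MvPolynomial X R →ₐ[R] Module.End R A := h.unitizationAction.comp
    (MvPolynomial.aeval fun x => (F (positivePolynomials.var R x) : Unitization R C))
  let : Module (MvPolynomial X R) A := Module.compHom A (α : MvPolynomial X R →+* Module.End R A)
  have : IsScalarTower R (MvPolynomial X R) A :=
    ⟨fun r u a => LinearMap.congr_fun (map_smul α r u) a⟩
  have : IsScalarTower (MvPolynomial X R) A A :=
    ⟨fun _ a a' => (h.unitizationAction_mul_left _ a a').symm⟩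
  have : SMulCommClass (MvPolynomial X R) A A :=
    ⟨fun _ a a' => h.unitizationAction_mul_right _ a a'⟩
  have coe_smul (c : positivePolynomials R X) (a : A) :
      (c : MvPolynomial X R) • a = ρ (F c ⊗ₜ[R] a) := by
    rw [← h.unitizationAction_inr, ← positivePolynomials.aeval_inr_eq F c]; rfl
  simpa only [← coe_smul, Subtype.forall, SetLike.mem_coe] using
    existsUnique_hom_tensor_positiveTensors
      (positivePolynomials.algebra_adjoin_eq_top (R := R) (X := X)) ψ

end IsSCVorAlgebra

section FreeAction

variable {R P : Type*} [CommSemiring R] [Semiring P] [Algebra R P]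

theorem exists_apply_tmul_eq_smul {A : Type*} [AddCommMonoid A] [Module R A] [Module P A]
    [IsScalarTower R P A] (S : NonUnitalSubalgebra R P) :
    ∃ ρ : S ⊗[R] A →ₗ[R] A, ∀ (c : S) (a : A), ρ (c ⊗ₜ[R] a) = (c : P) • a :=
  ⟨TensorProduct.lift ((Algebra.lsmul R R A).toLinearMap ∘ₗ S.toSubmodule.subtype), fun _ _ => rfl⟩

theorem apply_tmul_eq_smul_of_pure {T : Type*} [AddCommMonoid T] [Module R T]
    {S : NonUnitalSubalgebra R P} {ρ : S ⊗[R] (P ⊗[R] T) →ₗ[R] P ⊗[R] T}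
    (hρ : ∀ (c : S) (u : P) (t : T), ρ (c ⊗ₜ[R] (u ⊗ₜ[R] t)) = ((c : P) * u) ⊗ₜ[R] t)
    (c : S) (a : P ⊗[R] T) : ρ (c ⊗ₜ[R] a) = (c : P) • a := by
  induction a with
  | zero => simp only [TensorProduct.tmul_zero, map_zero, smul_zero]
  | add a a' ha ha' => simp only [TensorProduct.tmul_add, map_add, smul_add, ha, ha']
  | tmul u t => rw [hρ, TensorProduct.smul_tmul', smul_eq_mul]

end FreeAction

theorem freeSCVorAlgebra_general (R : Type*) [CommSemiring R] (X W : Type*) [AddCommMonoid W]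
    [Module R W] :
    (∃ ρ₀ : positivePolynomials R X ⊗[R] (MvPolynomial X R ⊗[R] positiveTensors R W) →ₗ[R]
        MvPolynomial X R ⊗[R] positiveTensors R W,
      ∀ c u v, ρ₀ (c ⊗ₜ[R] (u ⊗ₜ[R] v)) = ((c : MvPolynomial X R) * u) ⊗ₜ[R] v) ∧
    ∀ ρ₀ : positivePolynomials R X ⊗[R] (MvPolynomial X R ⊗[R] positiveTensors R W) →ₗ[R]
        MvPolynomial X R ⊗[R] positiveTensors R W,
      (∀ c u v, ρ₀ (c ⊗ₜ[R] (u ⊗ₜ[R] v)) = ((c : MvPolynomial X R) * u) ⊗ₜ[R] v) →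
      IsSCVorAlgebra ρ₀ ∧
      ∀ (C : Type*) [NonUnitalCommSemiring C] [Module R C] [SMulCommClass R C C]
        [IsScalarTower R C C] (A : Type*) [NonUnitalSemiring A] [Module R A] [SMulCommClass R A A]
        [IsScalarTower R A A] (ρ : C ⊗[R] A →ₗ[R] A), IsSCVorAlgebra ρ →
        ∀ (φ : X → C) (ψ : W →ₗ[R] A),
        ∃! F : positivePolynomials R X →ₙₐ[R] C,
          (∀ x, F (positivePolynomials.var R x) = φ x) ∧
          ∃! G : MvPolynomial X R ⊗[R] positiveTensors R W →ₙₐ[R] A,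
            (∀ w, G (1 ⊗ₜ positiveTensors.ι R w) = ψ w) ∧
            ∀ c a, G (ρ₀ (c ⊗ₜ[R] a)) = ρ (F c ⊗ₜ[R] G a) := by
  obtain ⟨ρ₁, hρ₁⟩ := exists_apply_tmul_eq_smul (A := MvPolynomial X R ⊗[R] positiveTensors R W)
    (positivePolynomials R X)
  refine ⟨⟨ρ₁, fun c u v => hρ₁ c (u ⊗ₜ v)⟩, fun ρ₀ hρ₀ => ?_⟩
  have act_eq_smul := apply_tmul_eq_smul_of_pure hρ₀
  refine ⟨.of_apply_tmul_eq_smul act_eq_smul, fun C _ _ _ _ A _ _ _ _ ρ h φ ψ => ?_⟩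
  simp only [act_eq_smul]
  obtain ⟨F, hF, F_unique⟩ := positivePolynomials.existsUnique_hom (R := R) φ
  exact ⟨F, ⟨hF, h.existsUnique_hom_open F ψ⟩, fun F' hF' => F_unique F' hF'.1⟩

/-- The triple `(C₀, A₀, ρ₀)` is an `H₀(SC^vor)`-algebra and it is the free
`H₀(SC^vor)`-algebra generated by `(X, W)`. -/
theorem freeSCVorAlgebra
    (k : Type*) [Field k] [CharZero k] (X : Type*)
    (W : Type*) [AddCommGroup W] [Module k W] :
    -- `ρ₀` exists (and is unique, being determined on generators) ...
    (∃ ρ₀ : (freeNonUnitalComm k X) ⊗[k] (freeSCVorOpen k X W) →ₗ[k] freeSCVorOpen k X W,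
      IsFreeSCVorAction k X W ρ₀) ∧
    ∀ ρ₀ : (freeNonUnitalComm k X) ⊗[k] (freeSCVorOpen k X W) →ₗ[k] freeSCVorOpen k X W,
      IsFreeSCVorAction k X W ρ₀ →
      -- (1) `C₀` is commutative, `A₀` is associative with componentwise multiplication,
      -- and `ρ₀` satisfies the `H₀(SC^vor)`-algebra axioms ...
      ((∀ c c' : freeNonUnitalComm k X, c * c' = c' * c) ∧
      (∀ a b c : freeSCVorOpen k X W, a * b * c = a * (b * c)) ∧
      (∀ (u u' : MvPolynomial X k) (v v' : freeNonUnitalAssoc k W),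
        (u ⊗ₜ[k] v) * (u' ⊗ₜ[k] v') = (u * u') ⊗ₜ[k] (v * v')) ∧
      (∀ (c c' : freeNonUnitalComm k X) (a : freeSCVorOpen k X W),
        ρ₀ ((c * c') ⊗ₜ[k] a) = ρ₀ (c ⊗ₜ[k] ρ₀ (c' ⊗ₜ[k] a)) ∧
        ρ₀ ((c * c') ⊗ₜ[k] a) = ρ₀ (c' ⊗ₜ[k] ρ₀ (c ⊗ₜ[k] a))) ∧
      (∀ (c : freeNonUnitalComm k X) (a a' : freeSCVorOpen k X W),
        ρ₀ (c ⊗ₜ[k] (a * a')) = ρ₀ (c ⊗ₜ[k] a) * a' ∧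
        ρ₀ (c ⊗ₜ[k] (a * a')) = a * ρ₀ (c ⊗ₜ[k] a')) ∧
      -- (2) ... and `(C₀, A₀, ρ₀)` is the free such structure generated by `(X, W)`.
      (∀ (C : Type*) (_ : NonUnitalCommRing C) (_ : Module k C)
        (_ : SMulCommClass k C C) (_ : IsScalarTower k C C)
        (A : Type*) (_ : NonUnitalRing A) (_ : Module k A)
        (_ : SMulCommClass k A A) (_ : IsScalarTower k A A)
        (ρ : C ⊗[k] A →ₗ[k] A),
        (∀ (c c' : C) (a : A),
          ρ ((c * c') ⊗ₜ[k] a) = ρ (c ⊗ₜ[k] ρ (c' ⊗ₜ[k] a)) ∧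
          ρ ((c * c') ⊗ₜ[k] a) = ρ (c' ⊗ₜ[k] ρ (c ⊗ₜ[k] a))) →
        (∀ (c : C) (a a' : A),
          ρ (c ⊗ₜ[k] (a * a')) = ρ (c ⊗ₜ[k] a) * a' ∧
          ρ (c ⊗ₜ[k] (a * a')) = a * ρ (c ⊗ₜ[k] a')) →
        ∀ (φ : X → C) (ψ : W →ₗ[k] A),
        ∃! F : freeNonUnitalComm k X →ₙₐ[k] C,
          (∀ x : X, F (varC k x) = φ x) ∧
          ∃! G : freeSCVorOpen k X W →ₙₐ[k] A,
            (∀ w : W, G ((1 : MvPolynomial X k) ⊗ₜ[k] iotaW k w) = ψ w) ∧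
            (∀ (c : freeNonUnitalComm k X) (a : freeSCVorOpen k X W),
              G (ρ₀ (c ⊗ₜ[k] a)) = ρ (F c ⊗ₜ[k] G a)))) := by
  obtain ⟨exists_action, free⟩ := freeSCVorAlgebra_general k X W
  exact ⟨exists_action, fun ρ₀ hρ₀ => ⟨mul_comm, mul_assoc,
    fun _ _ _ _ => Algebra.TensorProduct.tmul_mul_tmul _ _ _ _,
    (free ρ₀ hρ₀).1.mul_act, (free ρ₀ hρ₀).1.act_mul,
    fun C _ _ _ _ A _ _ _ _ ρ mul_act act_mul => (free ρ₀ hρ₀).2 C A ρ ⟨mul_act, act_mul⟩⟩⟩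
end
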